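/- Every binary code of length 15 with exactly 256 codewords and minimum distance 5 is completely transitive. (In particular, the punctured Nordstrom-Robinson code is completely transitive.) -/

import Mathlib

open Set

/-- Distance from a vertex to a code in the binary Hamming space. -/
noncomputable def distToCode {m : ℕ} (C : Set (Fin m → ZMod 2)) (x : Fin m → ZMod 2) : ℕ :=
  sInf {d | ∃ c ∈ C, hammingDist x c = d}

/-- `C` has minimum distance `δ`. -/
def IsMinDist {m : ℕ} (C : Set (Fin m → ZMod 2)) (δ : ℕ) : Prop :=
  (∀ x ∈ C, ∀ y ∈ C, x ≠ y → δ ≤ hammingDist x y) ∧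
  ∃ x ∈ C, ∃ y ∈ C, x ≠ y ∧ hammingDist x y = δ

/-- `C` is completely regular: the number of codewords at distance `k` from `γ`
depends only on `distToCode C γ` and `k`. -/
def IsCompletelyRegular {m : ℕ} (C : Set (Fin m → ZMod 2)) : Prop :=
  ∀ γ γ' : Fin m → ZMod 2, distToCode C γ = distToCode C γ' →
    ∀ k : ℕ, {c ∈ C | hammingDist γ c = k}.ncard = {c ∈ C | hammingDist γ' c = k}.ncard

/-- A permutation of `F_2^m` is an automorphism of the Hamming graph iff it has
the form `x ↦ (x ∘ σ⁻¹) + v` for a coordinate permutation `σ` and `v ∈ F_2^m`. -/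
def IsHammingAut {m : ℕ} (f : Equiv.Perm (Fin m → ZMod 2)) : Prop :=
  ∃ (σ : Equiv.Perm (Fin m)) (v : Fin m → ZMod 2),
    ∀ x : Fin m → ZMod 2, f x = (fun i => x (σ.symm i)) + v

/-- `C` is completely transitive: some group `X` of Hamming-graph automorphisms
preserving `C` has each cell of the distance partition as a single orbit. -/
def IsCompletelyTransitive {m : ℕ} (C : Set (Fin m → ZMod 2)) : Prop :=
  ∃ X : Subgroup (Equiv.Perm (Fin m → ZMod 2)),
    (∀ g ∈ X, IsHammingAut g ∧ ⇑g '' C = C) ∧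
    ∀ i : ℕ, ∀ x : Fin m → ZMod 2, distToCode C x = i →
      {y | distToCode C y = i} = {y | ∃ g ∈ X, g x = y}

/-! ### Signs and characters -/

namespace NR

abbrev V := Fin 16 → ZMod 2

def chi (a : ZMod 2) : ℤ := if a = 0 then 1 else -1

lemma chi_add (a b : ZMod 2) : chi (a + b) = chi a * chi b := by
  revert a b; decide

lemma chi_zero : chi 0 = 1 := by decide

lemma chi_sq (a : ZMod 2) : chi a * chi a = 1 := by
  revert a; decide

lemma chi_or (a : ZMod 2) : chi a = 1 ∨ chi a = -1 := by
  revert a; decide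

lemma chi_eq_one {a : ZMod 2} (h : chi a = 1) : a = 0 := by
  revert a; decide

lemma chi_eq_neg {a : ZMod 2} (h : chi a = -1) : a = 1 := by
  revert a; decide

/-- The character sum `16 - 2 wt(z)`. -/
def T (z : V) : ℤ := ∑ i, chi (z i)

/-- Character attached to a set of coordinates. -/
def ch (S : Finset (Fin 16)) (z : V) : ℤ := ∏ i ∈ S, chi (z i)

lemma ch_add (S : Finset (Fin 16)) (x y : V) : ch S (x + y) = ch S x * ch S y := by
  simp [ch, chi_add, Finset.prod_mul_distrib]

lemma ch_mul (S S' : Finset (Fin 16)) (z : V) :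
    ch S z * ch S' z = ch (symmDiff S S') z := by
  have key : ∀ A : Finset (Fin 16), ch A z = ∏ i, if i ∈ A then chi (z i) else 1 := by
    intro A; simp [ch, Finset.prod_ite_mem]
  rw [key, key, key, ← Finset.prod_mul_distrib]
  refine Finset.prod_congr rfl fun i _ => ?_
  have := chi_sq (z i)
  by_cases h1 : i ∈ S <;> by_cases h2 : i ∈ S' <;> simp [Finset.mem_symmDiff, h1, h2, this]

/-- Elementary symmetric functions of the signs of `z`. -/
def e (k : ℕ) (z : V) : ℤ := ∑ S ∈ Finset.powersetCard k Finset.univ, ch S z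

lemma e_zero (z : V) : e 0 z = 1 := by simp [e, ch]

lemma aeval_e (k : ℕ) (z : V) :
    MvPolynomial.aeval (fun i => chi (z i)) (MvPolynomial.esymm (Fin 16) ℤ k) = e k z := by
  simp [MvPolynomial.esymm, e, ch, map_sum, map_prod]

lemma newton (k : ℕ) (z : V) : (k : ℤ) * e k z = (-1) ^ (k + 1) *
    ∑ a ∈ Finset.HasAntidiagonal.antidiagonal k with a.1 < k, (-1) ^ a.1 * e a.1 z * ∑ i, chi (z i) ^ a.2 := by
  have h := congrArg (MvPolynomial.aeval (fun i => chi (z i)))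
    (MvPolynomial.mul_esymm_eq_sum (Fin 16) ℤ k)
  simp only [map_mul, map_pow, map_neg, map_one, map_sum, map_natCast, aeval_e,
    MvPolynomial.psum, MvPolynomial.aeval_X] at h
  exact h

lemma ps1 (z : V) : ∑ i, chi (z i) ^ 1 = T z := by simp [T]
lemma ps2 (z : V) : ∑ i, chi (z i) ^ 2 = 16 := by simp [pow_two, chi_sq]
lemma ps3 (z : V) : ∑ i, chi (z i) ^ 3 = T z := by
  refine Finset.sum_congr rfl fun i _ => ?_
  rw [pow_succ, pow_two, chi_sq, one_mul]
lemma ps4 (z : V) : ∑ i, chi (z i) ^ 4 = 16 := by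
  have : ∀ i, chi (z i) ^ 4 = 1 := fun i => by
    rw [show 4 = 2 * 2 from rfl, pow_mul, pow_two (chi (z i)), chi_sq, one_pow]
  simp [this]

lemma e_one (z : V) : e 1 z = T z := by
  have h := newton 1 z
  rw [show (Finset.HasAntidiagonal.antidiagonal 1).filter (fun a : ℕ × ℕ => a.1 < 1) = {(0,1)} by decide] at h
  rw [Finset.sum_singleton] at h
  simp only [ps1, e_zero] at h
  norm_num at h
  exact h

lemma e_two (z : V) : 2 * e 2 z = T z ^ 2 - 16 := by
  have h := newton 2 z
  rw [show (Finset.HasAntidiagonal.antidiagonal 2).filter (fun a : ℕ × ℕ => a.1 < 2) = {(0,2),(1,1)} by decide] at h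
  rw [Finset.sum_pair (by decide)] at h
  simp only [ps1, ps2, e_zero, e_one] at h
  push_cast at h
  linear_combination h

lemma e_three (z : V) : 6 * e 3 z = T z ^ 3 - 46 * T z := by
  have h := newton 3 z
  rw [show (Finset.HasAntidiagonal.antidiagonal 3).filter (fun a : ℕ × ℕ => a.1 < 3) = {(0,3),(1,2),(2,1)} by
    decide] at h
  rw [Finset.sum_insert (by decide), Finset.sum_pair (by decide)] at h
  simp only [ps1, ps2, ps3, e_zero, e_one] at h
  push_cast at h
  linear_combination 2 * h + T z * e_two z

lemma e_four (z : V) : 24 * e 4 z = T z ^ 4 - 88 * T z ^ 2 + 672 := by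
  have h := newton 4 z
  rw [show (Finset.HasAntidiagonal.antidiagonal 4).filter (fun a : ℕ × ℕ => a.1 < 4) =
    {(0,4),(1,3),(2,2),(3,1)} by decide] at h
  rw [Finset.sum_insert (by decide), Finset.sum_insert (by decide),
    Finset.sum_pair (by decide)] at h
  simp only [ps1, ps2, ps3, ps4, e_zero, e_one] at h
  push_cast at h
  linear_combination 6 * h - 48 * e_two z + T z * e_three z

/-- Hypotheses on the extended code. -/
structure Good (C : Finset V) : Prop where
  card : C.card = 256
  dist : ∀ x ∈ C, ∀ y ∈ C, x ≠ y → T (x + y) ≤ 4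
  even : ∀ x ∈ C, ∀ y ∈ C, (4 : ℤ) ∣ T (x + y)

def M (C : Finset V) (S : Finset (Fin 16)) : ℤ := ∑ c ∈ C, ch S c

lemma sum_sum_e (C : Finset V) (k : ℕ) :
    ∑ x ∈ C, ∑ y ∈ C, e k (x + y) = ∑ S ∈ Finset.powersetCard k Finset.univ, M C S ^ 2 := by
  simp only [e, ch_add, M, pow_two, Finset.sum_mul_sum]
  simp_rw [Finset.sum_comm (s := C) (t := Finset.powersetCard k Finset.univ)]

lemma T_le (z : V) : T z ≤ 16 := by
  have : T z ≤ ∑ i : Fin 16, (1 : ℤ) :=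
    Finset.sum_le_sum fun i _ => by rcases chi_or (z i) with h | h <;> rw [h] <;> norm_num
  simpa using this

lemma le_T (z : V) : -16 ≤ T z := by
  have : ∑ i : Fin 16, (-1 : ℤ) ≤ T z :=
    Finset.sum_le_sum fun i _ => by rcases chi_or (z i) with h | h <;> rw [h] <;> norm_num
  simpa using this

lemma T_zero : T 0 = 16 := by simp [T, chi_zero]

lemma T_add_one (z : V) : T (z + 1) = - T z := by
  simp only [T, Pi.add_apply, chi_add, Pi.one_apply]
  rw [show chi 1 = -1 by decide]
  simp

lemma T_eq_sixteen {z : V} (h : T z = 16) : z = 0 := by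
  by_contra hz
  have ⟨i, hi⟩ : ∃ i, z i ≠ 0 := by
    by_contra hcon; push Not at hcon; exact hz (funext hcon)
  have h1 : T z < ∑ i : Fin 16, (1 : ℤ) := by
    refine Finset.sum_lt_sum (fun i _ => ?_) ⟨i, Finset.mem_univ _, ?_⟩
    · rcases chi_or (z i) with h | h <;> rw [h] <;> norm_num
    · rcases chi_or (z i) with h | h
      · exact absurd (chi_eq_one h) hi
      · rw [h]; norm_num
  simp at h1; omega

lemma two_add (x : V) : x + x = 0 := by
  funext i; simpa using CharTwo.add_self_eq_zero (x i)

lemma eq_of_add_eq_zero {x y : V} (h : x + y = 0) : x = y := by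
  have : x + y + y = y := by rw [h, zero_add]
  rwa [add_assoc, two_add, add_zero] at this

lemma T_eq_neg {z : V} (h : T z = -16) : z = 1 := by
  have := T_add_one z
  rw [h] at this
  exact eq_of_add_eq_zero (T_eq_sixteen (by omega))

def f (t : ℤ) : ℤ := t ^ 4 + 16 * t ^ 3 - 16 * t ^ 2 - 256 * t

lemma f_e (z : V) : f (T z) = 24 * e 4 z + 96 * e 3 z + 144 * e 2 z + 480 * e 1 z + 480 := by
  unfold f
  linear_combination - e_four z - 16 * e_three z - 72 * e_two z - 480 * e_one z

lemma cases_T {C : Finset V} (h : Good C) {x y : V} (hx : x ∈ C) (hy : y ∈ C) (hxy : x ≠ y) :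
    T (x + y) = 4 ∨ T (x + y) = 0 ∨ T (x + y) = -4 ∨ T (x + y) = -8 ∨ T (x + y) = -12 ∨
    T (x + y) = -16 := by
  have h1 := h.dist x hx y hy hxy
  have h2 := h.even x hx y hy
  have h3 := le_T (x + y)
  omega

lemma f_nonpos {C : Finset V} (h : Good C) {x y : V} (hx : x ∈ C) (hy : y ∈ C) (hxy : x ≠ y) :
    f (T (x + y)) ≤ 0 := by
  rcases cases_T h hx hy hxy with h | h | h | h | h | h <;> rw [h] <;> norm_num [f]

lemma lp_total {C : Finset V} (h : Good C) :
    ∑ x ∈ C, ∑ y ∈ C, f (T (x + y)) =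
      24 * ∑ S ∈ Finset.powersetCard 4 Finset.univ, M C S ^ 2 +
      96 * ∑ S ∈ Finset.powersetCard 3 Finset.univ, M C S ^ 2 +
      144 * ∑ S ∈ Finset.powersetCard 2 Finset.univ, M C S ^ 2 +
      480 * ∑ S ∈ Finset.powersetCard 1 Finset.univ, M C S ^ 2 + 480 * 65536 := by
  simp only [f_e, Finset.sum_add_distrib, ← Finset.mul_sum, sum_sum_e]
  simp [h.card]

lemma lp_le {C : Finset V} (h : Good C) :
    ∑ x ∈ C, ∑ y ∈ C, (f (T (x + y)) - if x = y then 122880 else 0) =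
    ∑ x ∈ C, ∑ y ∈ C, f (T (x + y)) - 480 * 65536 := by
  simp only [Finset.sum_sub_distrib, Finset.sum_ite_eq]
  simp [h.card]

lemma lp_term {C : Finset V} (h : Good C) {x y : V} (hx : x ∈ C) (hy : y ∈ C) :
    (f (T (x + y)) - if x = y then 122880 else 0) ≤ 0 := by
  by_cases hxy : x = y
  · subst hxy; rw [two_add, T_zero]; norm_num [f]
  · simpa [hxy] using f_nonpos h hx hy hxy

lemma M_zero {C : Finset V} (h : Good C) (S : Finset (Fin 16)) (h1 : 1 ≤ S.card)
    (h4 : S.card ≤ 4) : M C S = 0 := by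
  have ht := lp_total h
  have hl := lp_le h
  have hn : ∑ x ∈ C, ∑ y ∈ C, (f (T (x + y)) - if x = y then 122880 else 0) ≤ 0 :=
    Finset.sum_nonpos fun x hx => Finset.sum_nonpos fun y hy => lp_term h hx hy
  have p : ∀ k, 0 ≤ ∑ S ∈ Finset.powersetCard k (Finset.univ : Finset (Fin 16)), M C S ^ 2 :=
    fun k => Finset.sum_nonneg fun S _ => sq_nonneg _
  have p1 := p 1
  have p2 := p 2
  have p3 := p 3
  have p4 := p 4
  have key : ∑ S' ∈ Finset.powersetCard S.card (Finset.univ : Finset (Fin 16)), M C S' ^ 2 = 0 := by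
    have : S.card = 1 ∨ S.card = 2 ∨ S.card = 3 ∨ S.card = 4 := by omega
    rcases this with hc | hc | hc | hc <;> rw [hc] <;> linarith
  have := (Finset.sum_eq_zero_iff_of_nonneg (fun S _ => sq_nonneg _)).1 key S (by simp)
  simpa using this

lemma f_zero {C : Finset V} (h : Good C) {x y : V} (hx : x ∈ C) (hy : y ∈ C) (hxy : x ≠ y) :
    f (T (x + y)) = 0 := by
  have ht := lp_total h
  have hl := lp_le h
  have p : ∀ k, 0 ≤ ∑ S ∈ Finset.powersetCard k (Finset.univ : Finset (Fin 16)), M C S ^ 2 :=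
    fun k => Finset.sum_nonneg fun S _ => sq_nonneg _
  have p1 := p 1
  have p2 := p 2
  have p3 := p 3
  have p4 := p 4
  have hin : ∀ x ∈ C, ∑ y ∈ C, (f (T (x + y)) - if x = y then 122880 else 0) ≤ 0 :=
    fun x hx => Finset.sum_nonpos fun y hy => lp_term h hx hy
  have hn := Finset.sum_nonpos hin
  have h0 : ∑ x ∈ C, ∑ y ∈ C, (f (T (x + y)) - if x = y then 122880 else 0) = 0 := by linarith
  have h1 := (Finset.sum_eq_zero_iff_of_nonpos hin).1 h0 x hx
  have h2 := (Finset.sum_eq_zero_iff_of_nonpos (fun y hy => lp_term h hx hy)).1 h1 y hy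
  simpa [hxy] using h2

lemma dist_cases {C : Finset V} (h : Good C) {x y : V} (hx : x ∈ C) (hy : y ∈ C) :
    T (x + y) = 16 ∨ T (x + y) = 4 ∨ T (x + y) = 0 ∨ T (x + y) = -4 ∨ T (x + y) = -16 := by
  by_cases hxy : x = y
  · subst hxy; rw [two_add, T_zero]; simp
  · have hf := f_zero h hx hy hxy
    rcases cases_T h hx hy hxy with h | h | h | h | h | h <;> simp [h, f] at hf ⊢

lemma sum_e {C : Finset V} (h : Good C) (x : V) (k : ℕ) (h1 : 1 ≤ k) (h4 : k ≤ 4) :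
    ∑ c ∈ C, e k (x + c) = 0 := by
  simp only [e, ch_add]
  rw [Finset.sum_comm]
  refine Finset.sum_eq_zero fun S hS => ?_
  rw [← Finset.mul_sum]
  have hc := (Finset.mem_powersetCard.1 hS).2
  have : ∑ c ∈ C, ch S c = 0 := M_zero h S (by omega) (by omega)
  rw [this, mul_zero]

lemma mom1 {C : Finset V} (h : Good C) (x : V) : ∑ c ∈ C, T (x + c) = 0 := by
  have := sum_e h x 1 (by norm_num) (by norm_num)
  simpa only [e_one] using this

lemma mom2 {C : Finset V} (h : Good C) (x : V) : ∑ c ∈ C, T (x + c) ^ 2 = 4096 := by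
  have h2 := sum_e h x 2 (by norm_num) (by norm_num)
  have h3 : ∑ c ∈ C, T (x + c) ^ 2 = ∑ c ∈ C, (2 * e 2 (x + c) + 16) :=
    Finset.sum_congr rfl fun c _ => by rw [e_two]; ring
  rw [h3, Finset.sum_add_distrib, ← Finset.mul_sum, h2]
  simp [h.card]

lemma mom3 {C : Finset V} (h : Good C) (x : V) : ∑ c ∈ C, T (x + c) ^ 3 = 0 := by
  have h2 := sum_e h x 3 (by norm_num) (by norm_num)
  have h3 : ∑ c ∈ C, T (x + c) ^ 3 = ∑ c ∈ C, (6 * e 3 (x + c) + 46 * T (x + c)) :=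
    Finset.sum_congr rfl fun c _ => by rw [e_three]; ring
  rw [h3, Finset.sum_add_distrib, ← Finset.mul_sum, ← Finset.mul_sum, h2, mom1 h]
  simp

lemma mom4 {C : Finset V} (h : Good C) (x : V) : ∑ c ∈ C, T (x + c) ^ 4 = 256 * 736 := by
  have h2 := sum_e h x 4 (by norm_num) (by norm_num)
  have h3 : ∑ c ∈ C, T (x + c) ^ 4 = ∑ c ∈ C, (24 * e 4 (x + c) + 88 * T (x + c) ^ 2 - 672) :=
    Finset.sum_congr rfl fun c _ => by rw [e_four]; ring
  rw [h3, Finset.sum_sub_distrib, Finset.sum_add_distrib, ← Finset.mul_sum, ← Finset.mul_sum, h2,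
    mom2 h]
  simp [h.card]

lemma sum_e2e2 {C : Finset V} (h : Good C) (x y : V) :
    ∑ c ∈ C, e 2 (x + c) * e 2 (y + c) = 256 * e 2 (x + y) := by
  have h1 : ∀ c, e 2 (x + c) * e 2 (y + c) =
      ∑ S ∈ Finset.powersetCard 2 (Finset.univ : Finset (Fin 16)),
      ∑ S' ∈ Finset.powersetCard 2 (Finset.univ : Finset (Fin 16)),
        ch S x * ch S' y * ch (symmDiff S S') c := by
    intro c
    simp only [e, Finset.sum_mul_sum]
    refine Finset.sum_congr rfl fun S _ => Finset.sum_congr rfl fun S' _ => ?_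
    rw [ch_add, ch_add, ← ch_mul]; ring
  simp only [h1]
  rw [Finset.sum_comm, e, Finset.mul_sum]
  refine Finset.sum_congr rfl fun S hS => ?_
  rw [Finset.sum_comm, Finset.sum_eq_single S]
  · rw [← Finset.mul_sum, ch_add]
    simp [ch, h.card]; ring
  · intro S' hS' hne
    rw [← Finset.mul_sum]
    have : ∑ c ∈ C, ch (symmDiff S S') c = 0 := by
      apply M_zero h
      · rw [Nat.one_le_iff_ne_zero, Ne, Finset.card_eq_zero]
        intro h0
        exact hne (symmDiff_eq_bot.1 h0).symm
      · have a1 := (Finset.mem_powersetCard.1 hS).2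
        have a2 := (Finset.mem_powersetCard.1 hS').2
        have : (symmDiff S S').card ≤ (S ∪ S').card := Finset.card_le_card (by
          intro i; simp only [Finset.mem_symmDiff, Finset.mem_union]; tauto)
        have := Finset.card_union_le S S'
        omega
    rw [this, mul_zero]
  · intro hn; exact absurd hS hn

lemma mom22 {C : Finset V} (h : Good C) (x y : V) :
    ∑ c ∈ C, (T (x + c) ^ 2 - 16) * (T (y + c) ^ 2 - 16) = 512 * (T (x + y) ^ 2 - 16) := by
  have h3 : ∑ c ∈ C, (T (x + c) ^ 2 - 16) * (T (y + c) ^ 2 - 16) =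
      ∑ c ∈ C, 4 * (e 2 (x + c) * e 2 (y + c)) :=
    Finset.sum_congr rfl fun c _ => by rw [← e_two, ← e_two]; ring
  rw [h3, ← Finset.mul_sum, sum_e2e2 h, ← e_two]; ring

/-- The code is closed under complement. -/
lemma compl_mem {C : Finset V} (h : Good C) {c : V} (hc : c ∈ C) : c + 1 ∈ C := by
  by_contra hcon
  have hs : ∑ d ∈ C, (T (c + d) ^ 3 - 16 * T (c + d)) = 0 := by
    rw [Finset.sum_sub_distrib, ← Finset.mul_sum, mom3 h, mom1 h]; norm_num
  have hp : 0 < ∑ d ∈ C, (T (c + d) ^ 3 - 16 * T (c + d)) := by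
    refine Finset.sum_pos' (fun d hd => ?_) ⟨c, hc, by rw [two_add, T_zero]; norm_num⟩
    rcases dist_cases h hc hd with h | h | h | h | h
    on_goal 5 =>
      have : c + d = 1 := T_eq_neg h
      have : d = c + 1 := by rw [← this, ← add_assoc, two_add, zero_add]
      exact absurd (this ▸ hd) hcon
    all_goals rw [h]; norm_num
  omega

/-- Distance `8` is transitive in the strong sense. -/
lemma no_mixed {C : Finset V} (h : Good C) {x y d : V} (hx : x ∈ C) (hy : y ∈ C) (hd : d ∈ C)
    (hxd : T (x + d) = 0) (hyd : T (y + d) = 0) : (8 : ℤ) ∣ T (x + y) := by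
  by_contra hcon
  have hxy : T (x + y) ^ 2 = 16 := by
    rcases dist_cases h hx hy with h | h | h | h | h <;> simp [h] at hcon ⊢
  have hs := mom22 h x y
  rw [hxy] at hs
  have hp : 0 < ∑ c ∈ C, (T (x + c) ^ 2 - 16) * (T (y + c) ^ 2 - 16) := by
    refine Finset.sum_pos' (fun c hc => ?_) ⟨d, hd, by rw [hxd, hyd]; norm_num⟩
    have hk : ∀ u v : V, T (u + v) ^ 2 = 16 → (T (u + c) = 16 ∨ T (u + c) = -16) →
        T (v + c) ^ 2 = 16 := by
      intro u v huv hu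
      rcases hu with hu | hu
      · rw [← eq_of_add_eq_zero (T_eq_sixteen hu), add_comm]; exact huv
      · have : u + c = 1 := T_eq_neg hu
        have : c = u + 1 := by rw [← this, ← add_assoc, two_add, zero_add]
        rw [this, ← add_assoc, T_add_one, add_comm v, neg_sq]; exact huv
    have k1 := hk x y hxy
    have k2 := hk y x (by rw [add_comm]; exact hxy)
    rcases dist_cases h hx hc with h1 | h1 | h1 | h1 | h1 <;>
    rcases dist_cases h hy hc with h2 | h2 | h2 | h2 | h2 <;>
    simp [h1, h2] at k1 k2 ⊢
  omega

lemma mod8 (a b c d : V) : (8 : ℤ) ∣ T (a + b + c + d) +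
    (T (a + b) + T (a + c) + T (a + d) + T (b + c) + T (b + d) + T (c + d)) := by
  have : (8 : ℤ) ∣ (T (a + b + c + d) +
    (T (a + b) + T (a + c) + T (a + d) + T (b + c) + T (b + d) + T (c + d))) + 16 := by
    have : (T (a + b + c + d) +
      (T (a + b) + T (a + c) + T (a + d) + T (b + c) + T (b + d) + T (c + d))) + 16 =
      ∑ i, (chi (a i + b i + c i + d i) + (chi (a i + b i) + chi (a i + c i) + chi (a i + d i) +
        chi (b i + c i) + chi (b i + d i) + chi (c i + d i)) + 1) := by
      simp only [T, Finset.sum_add_distrib, Pi.add_apply]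
      simp
    rw [this]
    refine Finset.dvd_sum fun i _ => ?_
    generalize a i = p
    generalize b i = q
    generalize c i = r
    generalize d i = s
    revert p q r s
    decide
  omega

lemma sim1 {C : Finset V} (h : Good C) {a b c : V} (ha : a ∈ C) (hb : b ∈ C) (hc : c ∈ C)
    (hab : T (a + b) = 0) (hac : (8 : ℤ) ∣ T (a + c)) : (8 : ℤ) ∣ T (b + c) := by
  rcases dist_cases h ha hc with h1 | h1 | h1 | h1 | h1
  · rw [← eq_of_add_eq_zero (T_eq_sixteen h1), add_comm, hab]; norm_num
  · rw [h1] at hac; norm_num at hac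
  · exact no_mixed h hb hc ha (by rw [add_comm]; exact hab) (by rw [add_comm]; exact h1)
  · rw [h1] at hac; norm_num at hac
  · have h1 : a + c = 1 := T_eq_neg h1
    have : c = a + 1 := by rw [← h1, ← add_assoc, two_add, zero_add]
    rw [this, ← add_assoc, T_add_one, add_comm, hab]; norm_num

lemma sim {C : Finset V} (h : Good C) {a b c : V} (ha : a ∈ C) (hb : b ∈ C) (hc : c ∈ C)
    (hab : T (a + b) = 0) : (8 : ℤ) ∣ T (a + c) + T (b + c) := by
  have k1 := sim1 h ha hb hc hab
  have k2 := sim1 h hb ha hc (by rw [add_comm]; exact hab)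
  have k3 := h.even a ha c hc
  have k4 := h.even b hb c hc
  omega

/-- Translation invariance. -/
theorem translate {C : Finset V} (h : Good C) {a b c : V} (ha : a ∈ C) (hb : b ∈ C) (hc : c ∈ C)
    (hab : T (a + b) = 0) : a + b + c ∈ C := by
  by_contra hx
  set x := a + b + c with hxdef
  have hxc : T (x + c) = 0 := by rw [hxdef, add_assoc, two_add, add_zero, hab]
  have h22 := mom22 h x c
  rw [hxc] at h22
  have h2 := mom2 h x
  have h4 := mom4 h x
  have h2c := mom2 h c
  have htot : ∑ d ∈ C, (T (x + d) ^ 2 * (T (x + d) ^ 2 - 16) +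
      3 * ((T (x + d) ^ 2 - 16) * (T (c + d) ^ 2 - 16)) + 48 * (T (c + d) ^ 2 - 16)) = 98304 := by
    have : ∀ d, (T (x + d) ^ 2 * (T (x + d) ^ 2 - 16) +
      3 * ((T (x + d) ^ 2 - 16) * (T (c + d) ^ 2 - 16)) + 48 * (T (c + d) ^ 2 - 16)) =
      T (x + d) ^ 4 - 16 * T (x + d) ^ 2 + 3 * ((T (x + d) ^ 2 - 16) * (T (c + d) ^ 2 - 16)) +
      48 * T (c + d) ^ 2 - 768 := fun d => by ring
    simp only [this, Finset.sum_sub_distrib, Finset.sum_add_distrib, ← Finset.mul_sum,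
      h22, h2, h4, h2c]
    simp [h.card]
  have hdiv : (18432 : ℤ) ∣ 98304 := by
    rw [← htot]
    refine Finset.dvd_sum fun d hd => ?_
    have hm := mod8 a b c d
    rw [← hxdef, hab] at hm
    have e1 := sim h ha hb hc hab
    have e2 := sim h ha hb hd hab
    have hx16 : T (x + d) ≠ 16 := fun hh => hx (eq_of_add_eq_zero (T_eq_sixteen hh) ▸ hd)
    have hx16' : T (x + d) ≠ -16 := fun hh => by
      have h1 : x + d = 1 := T_eq_neg hh
      have : x = d + 1 := by rw [← h1, add_comm x, ← add_assoc, two_add, zero_add]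
      exact hx (this ▸ compl_mem h hd)
    have l1 := T_le (x + d)
    have l2 := le_T (x + d)
    have hc16 : T (c + d) = 16 → T (x + d) = 0 := fun hh => by
      rw [← eq_of_add_eq_zero (T_eq_sixteen hh)]; exact hxc
    have hc16' : T (c + d) = -16 → T (x + d) = 0 := fun hh => by
      have h1 : c + d = 1 := T_eq_neg hh
      have : d = c + 1 := by rw [← h1, ← add_assoc, two_add, zero_add]
      rw [this, ← add_assoc, T_add_one, hxc]; rfl
    rcases dist_cases h hc hd with h1 | h1 | h1 | h1 | h1 <;> rw [h1] at hm hc16 hc16' ⊢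
    · rw [hc16 rfl]; norm_num
    · have : T (x + d) = 4 ∨ T (x + d) = -4 ∨ T (x + d) = 12 ∨ T (x + d) = -12 := by omega
      rcases this with h | h | h | h <;> rw [h] <;> norm_num
    · have : T (x + d) = 0 ∨ T (x + d) = -8 ∨ T (x + d) = 8 := by omega
      rcases this with h | h | h <;> rw [h] <;> norm_num
    · have : T (x + d) = 4 ∨ T (x + d) = -4 ∨ T (x + d) = 12 ∨ T (x + d) = -12 := by omega
      rcases this with h | h | h | h <;> rw [h] <;> norm_num
    · rw [hc16' rfl]; norm_num
  norm_num at hdiv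

/-- Covering property for odd vectors. -/
lemma cover {C : Finset V} (h : Good C) (x : V) (hx : ∀ c ∈ C, T (x + c) % 4 = 2) :
    ∃ c ∈ C, 10 ≤ T (x + c) := by
  by_contra hcon
  push Not at hcon
  have hs : ∑ c ∈ C, (T (x + c) ^ 4 - 40 * T (x + c) ^ 2 + 144) = 256 * 240 := by
    rw [Finset.sum_add_distrib, Finset.sum_sub_distrib, ← Finset.mul_sum, mom4 h, mom2 h]
    simp [h.card]
  have h0 : ∑ c ∈ C, (T (x + c) ^ 4 - 40 * T (x + c) ^ 2 + 144) = 0 := by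
    refine Finset.sum_eq_zero fun c hc => ?_
    have h1 := hcon c hc
    have h2 := hcon _ (compl_mem h hc)
    rw [← add_assoc, T_add_one] at h2
    have h3 := hx c hc
    have : T (x + c) = 2 ∨ T (x + c) = -2 ∨ T (x + c) = 6 ∨ T (x + c) = -6 := by omega
    rcases this with h | h | h | h <;> rw [h] <;> norm_num
  omega

/-- The words at distance eight from zero vanishing at coordinate `0`. -/
def R0 (C : Finset V) : Finset V := C.filter fun r => T r = 0 ∧ r 0 = 0

lemma T_one : T 1 = -16 := by
  have := T_add_one 0
  rwa [zero_add, T_zero] at this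

lemma one_mem {C : Finset V} (h : Good C) (h0 : (0 : V) ∈ C) : (1 : V) ∈ C := by
  simpa using compl_mem h h0

lemma card_T0 {C : Finset V} (h : Good C) (h0 : (0 : V) ∈ C) :
    (C.filter fun r => T r = 0).card = 30 := by
  have h2 := mom2 h 0
  have hs : ∑ c ∈ C, (T (0 + c) ^ 2 - 16) = ∑ c ∈ C, ((if T c = 0 then -16 else 0) +
      (if c = 0 then 240 else 0) + (if c = 1 then 240 else 0)) := by
    refine Finset.sum_congr rfl fun c hc => ?_
    have hne : (0 : V) ≠ 1 := fun hh => by have := congrFun hh 0; simp at this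
    have hd := dist_cases h h0 hc
    rw [zero_add] at hd ⊢
    by_cases c0 : c = 0
    · subst c0; rw [T_zero]; simp
    by_cases c1 : c = 1
    · subst c1; rw [T_one]; simp
    have n1 : T c ≠ 16 := fun hh => c0 (T_eq_sixteen hh)
    have n2 : T c ≠ -16 := fun hh => c1 (T_eq_neg hh)
    rcases hd with hd | hd | hd | hd | hd <;> simp_all
  have hl : ∑ c ∈ C, (T (0 + c) ^ 2 - 16) = 0 := by
    rw [Finset.sum_sub_distrib, h2]; simp [h.card]
  rw [hl] at hs
  rw [Finset.sum_add_distrib, Finset.sum_add_distrib, Finset.sum_ite_eq', Finset.sum_ite_eq',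
    if_pos h0, if_pos (one_mem h h0), ← Finset.sum_filter] at hs
  simp at hs
  omega

lemma zmod2 (a : ZMod 2) : a = 0 ∨ a = 1 := by revert a; decide

lemma card_R0 {C : Finset V} (h : Good C) (h0 : (0 : V) ∈ C) : 15 ≤ (R0 C).card := by
  have h1 := card_T0 h h0
  have h2 := Finset.card_filter_add_card_filter_not (s := C.filter fun r => T r = 0)
    (fun r => r 0 = 0)
  rw [Finset.filter_filter, h1] at h2
  have h3 : ((C.filter fun r => T r = 0).filter (fun r => ¬ r 0 = 0)).card ≤ (R0 C).card := by
    refine Finset.card_le_card_of_injOn (fun r => r + 1) ?_ ?_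
    · intro r hr
      simp only [Finset.coe_filter, Finset.mem_filter, Set.mem_setOf_eq] at hr
      obtain ⟨⟨a, b⟩, c⟩ := hr
      simp only [R0, Finset.coe_filter, Set.mem_setOf_eq]
      refine ⟨compl_mem h a, by rw [T_add_one, b]; rfl, ?_⟩
      have := (zmod2 (r 0)).resolve_left c
      rw [Pi.add_apply, this]; decide
    · intro a _ b _ hab
      exact add_right_cancel hab
  unfold R0 at h3 ⊢
  omega

lemma R0_add {C : Finset V} (h : Good C) (h0 : (0 : V) ∈ C) {r s : V} (hr : r ∈ R0 C)
    (hs : s ∈ R0 C) (hne : r ≠ s) : r + s ∈ R0 C := by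
  simp only [R0, Finset.mem_filter] at hr hs ⊢
  obtain ⟨hr, tr, r0⟩ := hr
  obtain ⟨hs, ts, s0⟩ := hs
  have z : (r + s) 0 = 0 := by rw [Pi.add_apply, r0, s0]; rfl
  refine ⟨?_, ?_, z⟩
  · have := translate h hr h0 hs (by rw [add_zero]; exact tr)
    rwa [add_zero] at this
  · have h8 := no_mixed h hr hs h0 (by rw [add_zero]; exact tr) (by rw [add_zero]; exact ts)
    rcases dist_cases h hr hs with h1 | h1 | h1 | h1 | h1
    · exact absurd (eq_of_add_eq_zero (T_eq_sixteen h1)) hne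
    · rw [h1] at h8; norm_num at h8
    · exact h1
    · rw [h1] at h8; norm_num at h8
    · rw [T_eq_neg h1] at z; simp at z

lemma pick {A : Finset V} (l : Finset V) (h : l.card < A.card) : ∃ r ∈ A, r ∉ l := by
  by_contra hcon
  push Not at hcon
  exact absurd (Finset.card_le_card hcon) (by omega)

lemma ne_add {r s t : V} (h : r ≠ s + t) : s ≠ t + r := by
  rintro rfl
  apply h
  rw [add_comm t r, add_assoc, two_add, add_zero]

/-- Standard linear functions. -/
def std (k : ℕ) : V := fun i => if (i : ℕ) / 2 ^ k % 2 = 1 then 1 else 0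

lemma T_mul_eq (x y : V) : ∑ i, chi (x i) * chi (y i) = T (x + y) := by
  simp [T, chi_add]

lemma coords {C : Finset V} (h : Good C) (h0 : (0 : V) ∈ C) :
    ∃ φ : Equiv.Perm (Fin 16), φ 0 = 0 ∧ ∀ k < 4, std k ∘ φ ∈ C := by
  have hc := card_R0 h h0
  have cl := fun {r s : V} => R0_add h h0 (r := r) (s := s)
  obtain ⟨a, ha, -⟩ := pick (A := R0 C) ∅ (by rw [Finset.card_empty]; omega)
  obtain ⟨b, hb, hb'⟩ := pick (A := R0 C) {a} (by rw [Finset.card_singleton]; omega)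
  obtain ⟨c, hc1, hc'⟩ := pick (A := R0 C) {a, b, a + b}
    (lt_of_le_of_lt Finset.card_le_three (by omega))
  obtain ⟨d, hd, hd'⟩ := pick (A := R0 C) ({a, b, a + b} ∪ {c, a + c, b + c} ∪ {a + b + c}) (by
    have h1 := Finset.card_union_le (({a, b, a + b} : Finset V) ∪ {c, a + c, b + c}) {a + b + c}
    have h2 := Finset.card_union_le ({a, b, a + b} : Finset V) {c, a + c, b + c}
    have h3 := Finset.card_le_three (a := a) (b := b) (c := a + b)
    have h4 := Finset.card_le_three (a := c) (b := a + c) (c := b + c)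
    rw [Finset.card_singleton] at h1
    omega)
  simp only [Finset.mem_singleton, Finset.mem_insert, Finset.mem_union, not_or] at hb' hc' hd'
  obtain ⟨ca, cb, cab⟩ := hc'
  obtain ⟨⟨⟨da, db, dab⟩, dc, dac, dbc⟩, dabc⟩ := hd'
  have mab := cl ha hb (Ne.symm hb')
  have mac := cl ha hc1 (Ne.symm ca)
  have mbc := cl hb hc1 (Ne.symm cb)
  have mabc := cl mab hc1 (Ne.symm cab)
  have mad := cl ha hd (Ne.symm da)
  have mbd := cl hb hd (Ne.symm db)
  have mabd := cl mab hd (Ne.symm dab)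
  have mcd := cl hc1 hd (Ne.symm dc)
  have macd := cl mac hd (Ne.symm dac)
  have mbcd := cl mbc hd (Ne.symm dbc)
  have mabcd := cl mabc hd (Ne.symm dabc)
  have tz : ∀ {r : V}, r ∈ R0 C → T r = 0 := fun hr => (Finset.mem_filter.1 hr).2.1
  have cz : ∀ {r : V}, r ∈ R0 C → r 0 = 0 := fun hr => (Finset.mem_filter.1 hr).2.2
  have mz : ∀ {r : V}, r ∈ R0 C → r ∈ C := fun hr => (Finset.mem_filter.1 hr).1
  -- the coordinate map
  let g : Fin 16 → Fin 16 := fun i =>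
    ⟨(a i).val + 2 * (b i).val + 4 * (c i).val + 8 * (d i).val, by
      have := (a i).val_lt; have := (b i).val_lt; have := (c i).val_lt; have := (d i).val_lt
      omega⟩
  have hg : Function.Injective g := by
    intro i j hij
    by_contra hne
    have hv := congrArg Fin.val hij
    simp only [g] at hv
    have := (a i).val_lt; have := (b i).val_lt; have := (c i).val_lt; have := (d i).val_lt
    have := (a j).val_lt; have := (b j).val_lt; have := (c j).val_lt; have := (d j).val_lt
    have ea : a i = a j := ZMod.val_injective 2 (by omega)
    have eb : b i = b j := ZMod.val_injective 2 (by omega)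
    have ec : c i = c j := ZMod.val_injective 2 (by omega)
    have ed : d i = d j := ZMod.val_injective 2 (by omega)
    let F : Fin 16 → ℤ := fun k => (1 + chi (a i) * chi (a k)) * (1 + chi (b i) * chi (b k)) *
      (1 + chi (c i) * chi (c k)) * (1 + chi (d i) * chi (d k))
    have hF : ∑ k, F k = 16 := by
      have : ∀ k, F k = 1 + chi (a i) * chi (a k) + chi (b i) * chi (b k) + chi (c i) * chi (c k)
          + chi (d i) * chi (d k)
          + chi (a i) * chi (b i) * chi ((a + b) k) + chi (a i) * chi (c i) * chi ((a + c) k)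
          + chi (b i) * chi (c i) * chi ((b + c) k) + chi (a i) * chi (d i) * chi ((a + d) k)
          + chi (b i) * chi (d i) * chi ((b + d) k) + chi (c i) * chi (d i) * chi ((c + d) k)
          + chi (a i) * chi (b i) * chi (c i) * chi ((a + b + c) k)
          + chi (a i) * chi (b i) * chi (d i) * chi ((a + b + d) k)
          + chi (a i) * chi (c i) * chi (d i) * chi ((a + c + d) k)
          + chi (b i) * chi (c i) * chi (d i) * chi ((b + c + d) k)
          + chi (a i) * chi (b i) * chi (c i) * chi (d i) * chi ((a + b + c + d) k) := by
        intro k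
        simp only [F, Pi.add_apply, chi_add]; ring
      simp only [this, Finset.sum_add_distrib, ← Finset.mul_sum]
      have tt : ∀ z : V, ∑ k, chi (z k) = T z := fun z => rfl
      simp only [tt, tz ha, tz hb, tz hc1, tz hd, tz mab, tz mac, tz mbc, tz mad, tz mbd, tz mcd,
        tz mabc, tz mabd, tz macd, tz mbcd, tz mabcd]
      simp
    have hpos : ∀ k ∈ (Finset.univ : Finset (Fin 16)), 0 ≤ F k := by
      intro k _
      have : ∀ x y : ZMod 2, 0 ≤ 1 + chi x * chi y := by decide
      exact mul_nonneg (mul_nonneg (mul_nonneg (this _ _) (this _ _)) (this _ _)) (this _ _)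
    have h2 : ∑ k ∈ ({i, j} : Finset (Fin 16)), F k ≤ ∑ k, F k :=
      Finset.sum_le_sum_of_subset_of_nonneg (Finset.subset_univ _) (fun k hk _ => hpos k hk)
    rw [Finset.sum_pair hne, hF] at h2
    simp only [F, ← ea, ← eb, ← ec, ← ed, chi_sq] at h2
    norm_num at h2
  refine ⟨Equiv.ofBijective g (Finite.injective_iff_bijective.1 hg), ?_, ?_⟩
  · simp [g, cz ha, cz hb, cz hc1, cz hd]
  · have key : ∀ i, std 0 (g i) = a i ∧ std 1 (g i) = b i ∧ std 2 (g i) = c i ∧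
        std 3 (g i) = d i := by
      intro i
      have : ∀ p q r s : ZMod 2,
          ((if (p.val + 2 * q.val + 4 * r.val + 8 * s.val) / 2 ^ 0 % 2 = 1 then (1 : ZMod 2)
            else 0) = p) ∧
          ((if (p.val + 2 * q.val + 4 * r.val + 8 * s.val) / 2 ^ 1 % 2 = 1 then (1 : ZMod 2)
            else 0) = q) ∧
          ((if (p.val + 2 * q.val + 4 * r.val + 8 * s.val) / 2 ^ 2 % 2 = 1 then (1 : ZMod 2)
            else 0) = r) ∧
          ((if (p.val + 2 * q.val + 4 * r.val + 8 * s.val) / 2 ^ 3 % 2 = 1 then (1 : ZMod 2)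
            else 0) = s) := by decide
      exact this _ _ _ _
    intro k hk
    have : k = 0 ∨ k = 1 ∨ k = 2 ∨ k = 3 := by omega
    rcases this with rfl | rfl | rfl | rfl
    · convert mz ha using 1; exact funext fun i => (key i).1
    · convert mz hb using 1; exact funext fun i => (key i).2.1
    · convert mz hc1 using 1; exact funext fun i => (key i).2.2.1
    · convert mz hd using 1; exact funext fun i => (key i).2.2.2


/-! ### Numerical encoding -/

def encL : List ℕ → ℕ
  | [] => 0
  | a :: l => Nat.add a (Nat.mul 2 (encL l))

lemma encL_cons (a : ℕ) (l : List ℕ) : encL (a :: l) = a + 2 * encL l := rfl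

def enc (z : V) : ℕ := encL (List.ofFn fun i => (z i).val)

lemma enc_eq (z : V) : enc z = (z 0).val + 2 * ((z 1).val + 2 * ((z 2).val + 2 * ((z 3).val +
    2 * ((z 4).val + 2 * ((z 5).val + 2 * ((z 6).val + 2 * ((z 7).val + 2 * ((z 8).val +
    2 * ((z 9).val + 2 * ((z 10).val + 2 * ((z 11).val + 2 * ((z 12).val + 2 * ((z 13).val +
    2 * ((z 14).val + 2 * ((z 15).val + 2 * 0))))))))))))))) := by
  simp [enc, encL_cons, encL, List.ofFn_succ]

lemma encL_bit (l : List ℕ) (h : ∀ a ∈ l, a < 2) (i : ℕ) :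
    encL l / 2 ^ i % 2 = l.getD i 0 := by
  induction l generalizing i with
  | nil => simp [encL]
  | cons a l ih =>
    have h1 := h a (by simp)
    have h2 := ih fun b hb => h b (by simp [hb])
    cases i with
    | zero => simp [encL_cons]; omega
    | succ i =>
      rw [encL_cons, pow_succ', ← Nat.div_div_eq_div_mul, show (a + 2 * encL l) / 2 = encL l by omega,
        h2]
      simp

lemma enc_bit (z : V) (a : Fin 16) : enc z / 2 ^ (a : ℕ) % 2 = (z a).val := by
  rw [enc, encL_bit]
  · fin_cases a <;> simp
  · intro b hb
    obtain ⟨i, rfl⟩ := (List.mem_ofFn' _ _).1 hb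
    exact (z i).val_lt

lemma encL_lt (l : List ℕ) (h : ∀ a ∈ l, a < 2) : encL l < 2 ^ l.length := by
  induction l with
  | nil => simp [encL]
  | cons a l ih =>
    have h1 := h a (by simp)
    have h2 := ih fun b hb => h b (by simp [hb])
    rw [encL_cons, List.length_cons, pow_succ]
    omega

lemma enc_lt (z : V) : enc z < 2 ^ 16 := by
  have := encL_lt (List.ofFn fun i => (z i).val) (by
    intro a ha
    obtain ⟨i, rfl⟩ := (List.mem_ofFn' _ _).1 ha
    exact (z i).val_lt)
  rwa [List.length_ofFn] at this

lemma enc_inj : Function.Injective enc := by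
  intro z w h
  funext i
  apply ZMod.val_injective 2
  rw [← enc_bit, ← enc_bit, h]

lemma enc_add (z w : V) : enc (z + w) = enc z ^^^ enc w := by
  apply Nat.eq_of_testBit_eq
  intro i
  rw [Nat.testBit_xor]
  by_cases hi : i < 16
  · have key : ∀ y : V, (enc y).testBit i = decide ((y ⟨i, hi⟩).val = 1) := by
      intro y
      rw [Nat.testBit_eq_decide_div_mod_eq]
      have := enc_bit y ⟨i, hi⟩
      simp only at this
      rw [this]
    rw [key, key, key, Pi.add_apply]
    generalize z _ = p
    generalize w _ = q
    revert p q
    decide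
  · have key : ∀ y : V, (enc y).testBit i = false := by
      intro y
      exact Nat.testBit_lt_two_pow
        (lt_of_lt_of_le (enc_lt y) (Nat.pow_le_pow_right (by norm_num) (by omega)))
    simp [key]

def pop (m : ℕ) : ℕ :=
  m % 2 + (m / 2 % 2 + (m / 4 % 2 + (m / 8 % 2 + (m / 16 % 2 + (m / 32 % 2 + (m / 64 % 2 +
  (m / 128 % 2 + (m / 256 % 2 + (m / 512 % 2 + (m / 1024 % 2 + (m / 2048 % 2 + (m / 4096 % 2 +
  (m / 8192 % 2 + (m / 16384 % 2 + m / 32768 % 2))))))))))))))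

lemma pop_eq (m : ℕ) : pop m = ∑ i : Fin 16, m / 2 ^ (i : ℕ) % 2 := by
  simp [pop, Fin.sum_univ_succ]

lemma T_pop (z : V) : T z = 16 - 2 * (pop (enc z) : ℤ) := by
  rw [pop_eq]
  simp only [enc_bit]
  have : ∀ a : ZMod 2, chi a = 1 - 2 * (a.val : ℤ) := by decide
  simp [T, this, Finset.sum_sub_distrib, Finset.mul_sum]

def permN (p : List ℕ) (m : ℕ) : ℕ := encL (p.map fun a => Nat.mod (Nat.div m (Nat.pow 2 a)) 2)

lemma enc_perm (z : V) (σ : Fin 16 → Fin 16) :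
    enc (z ∘ σ) = permN (List.ofFn fun i => (σ i : ℕ)) (enc z) := by
  rw [permN, List.map_ofFn, enc]
  congr 2
  funext i
  exact (enc_bit z (σ i)).symm

/-! ### Data -/

def span : List ℕ → List ℕ
  | [] => [0]
  | a :: l => span l ++ (span l).map fun m => m ^^^ a

def gens : List ℕ := [65535, 43690, 52428, 61680, 65280]
def R32 : List ℕ := span gens
def R16 : List ℕ := span gens.tail

/-- Evaluates its argument before passing it on (for efficiency in the kernel). -/
def force (m : ℕ) (P : ℕ → Bool) : Bool :=
  Nat.rec (P 0) (fun n _ => P (n + 1)) m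

lemma force_eq (m : ℕ) (P : ℕ → Bool) : force m P = P m := by
  cases m <;> rfl

def memB (m : ℕ) : List ℕ → Bool
  | [] => false
  | a :: l => Nat.beq m a || memB m l

lemma memB_iff (m : ℕ) (l : List ℕ) : memB m l = true ↔ m ∈ l := by
  induction l with
  | nil => simp [memB]
  | cons a l ih => simp [memB, ih, Nat.beq_eq]

def L28 : List ℕ := [
  6376, 7816, 9448, 11848, 13984, 14944, 17128, 20008, 22208, 23648, 27328, 27808, 29224,
  29768, 30856, 32488, 39616, 40096, 42688, 44128, 46216, 47176, 50848, 51808, 53896,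
  55336, 57928, 58408]

def memX (m : ℕ) : Bool := force m fun k => memB k L28

def stars : List (ℕ × List ℕ) :=
  [(0, [6376, 11848, 22208, 27808, 29224, 46216, 51808]),
   (7, [6376, 13984, 20008, 27328, 29768, 44128, 53896]),
   (6, [7816, 9448, 23648, 27328, 29224, 47176, 50848]),
   (2, [7816, 14944, 17128, 27808, 29768, 42688, 55336]),
   (1, [9448, 14944, 20008, 22208, 30856, 40096, 57928]),
   (5, [11848, 13984, 17128, 23648, 30856, 39616, 58408]),
   (4, [32488, 39616, 44128, 46216, 50848, 55336, 57928]),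
   (3, [32488, 40096, 42688, 47176, 51808, 53896, 58408])]

def star0 : List ℕ := [0, 6376, 11848, 22208, 27808, 29224, 46216, 51808]

def nfr (m : ℕ) : ℕ :=
  (m % 2 * 65535) ^^^ ((m / 2 + m) % 2 * 43690) ^^^ ((m / 4 + m) % 2 * 52428) ^^^
    ((m / 16 + m) % 2 * 61680) ^^^ ((m / 256 + m) % 2 * 65280)

def inW (m : ℕ) : Bool := force m fun m => force (m ^^^ nfr m) fun k => memB k star0

lemma nfr_mem (m : ℕ) : nfr m ∈ R32 := by
  have key : ∀ a b c d e : Fin 2, memB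
      ((a.val * 65535) ^^^ (b.val * 43690) ^^^ (c.val * 52428) ^^^ (d.val * 61680) ^^^
      (e.val * 65280)) R32 = true := by
    decide +kernel
  have h2 : ∀ k : ℕ, k % 2 < 2 := fun k => Nat.mod_lt _ (by norm_num)
  exact (memB_iff _ _).1 (key ⟨_, h2 m⟩ ⟨_, h2 (m / 2 + m)⟩ ⟨_, h2 (m / 4 + m)⟩
    ⟨_, h2 (m / 16 + m)⟩ ⟨_, h2 (m / 256 + m)⟩)

def okP (k : ℕ) : Bool := memB k [0, 6, 8, 10, 16]

def allB (P : ℕ → Bool) : List ℕ → ℕ → Bool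
  | [], m => P m
  | a :: l, m => allB P l m && allB P l (m + a)

lemma allB_cons {P : ℕ → Bool} {a : ℕ} {l : List ℕ} {m : ℕ} (h : allB P (a :: l) m = true)
    (b : ℕ) (hb : b < 2) : allB P l (m + a * b) = true := by
  simp only [allB, Bool.and_eq_true] at h
  have : b = 0 ∨ b = 1 := by omega
  rcases this with rfl | rfl
  · simpa using h.1
  · simpa using h.2

def bentP (m : ℕ) : Bool :=
  !(R16.all fun r => force (m ^^^ r) fun k => force (pop k) okP) || memB m (0 :: L28)

lemma bent_check : allB bentP [8, 32, 64, 128, 512, 1024, 2048, 4096, 8192, 16384, 32768] 0 = true := by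
  decide +kernel

lemma star_check : (L28.all fun v => L28.all fun w => !memX (v ^^^ w) ||
    stars.any fun s => memB v s.2 && memB w s.2 && L28.all fun x =>
      !(memX (x ^^^ v) && memX (x ^^^ w)) ||
      !(L28.any fun y => memX (y ^^^ v) && memX (y ^^^ w) && memX (y ^^^ x)) ||
      memB x s.2) = true := by
  decide +kernel

def sgl (k : ℕ) : List ℕ := [0, 1, 2, 3, 4, 5, 6, 7].append
  ([8, 9, 10, 11, 12, 13, 14, 15].map fun i => i ^^^ k)

lemma perm_check : (stars.all fun s => (0 :: s.2).all fun v => R32.all fun r =>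
    inW (permN (sgl s.1) (v ^^^ r))) = true := by
  decide +kernel

/-- The numerical data extracted from a code in standard position. -/
structure NGood (E : Finset ℕ) : Prop where
  card : E.card = 256
  lt : ∀ m ∈ E, m < 2 ^ 16
  zero : 0 ∈ E
  ok : ∀ x ∈ E, ∀ y ∈ E, okP (pop (x ^^^ y)) = true
  tr : ∀ r ∈ R32, ∀ x ∈ E, x ^^^ r ∈ E

def nn (a b c d e : ℕ) : ℕ := (a * 65535) ^^^ ((b + a) % 2 * 43690) ^^^
  ((c + a) % 2 * 52428) ^^^ ((d + a) % 2 * 61680) ^^^ ((e + a) % 2 * 65280)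

lemma nf_bits (m : ℕ) : (m ^^^ nfr m) % 2 = 0 ∧ (m ^^^ nfr m) / 2 % 2 = 0 ∧
    (m ^^^ nfr m) / 4 % 2 = 0 ∧ (m ^^^ nfr m) / 16 % 2 = 0 ∧ (m ^^^ nfr m) / 256 % 2 = 0 := by
  have bit : ∀ k i : ℕ, k / 2 ^ i % 2 = (k.testBit i).toNat := by
    intro k i
    rw [Nat.toNat_testBit]
  have key : ∀ a b c d e : Fin 2,
      (decide (a.val = 1) ^^ (nn a.val b.val c.val d.val e.val).testBit 0) = false ∧
      (decide (b.val = 1) ^^ (nn a.val b.val c.val d.val e.val).testBit 1) = false ∧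
      (decide (c.val = 1) ^^ (nn a.val b.val c.val d.val e.val).testBit 2) = false ∧
      (decide (d.val = 1) ^^ (nn a.val b.val c.val d.val e.val).testBit 4) = false ∧
      (decide (e.val = 1) ^^ (nn a.val b.val c.val d.val e.val).testBit 8) = false := by
    decide +kernel
  have h2 : ∀ k : ℕ, k % 2 < 2 := fun k => Nat.mod_lt _ (by norm_num)
  have e : nfr m = nn (m % 2) (m / 2 % 2) (m / 4 % 2) (m / 16 % 2) (m / 256 % 2) := by
    simp only [nfr, nn, Nat.add_mod_mod, Nat.mod_add_mod]
  have k := key ⟨_, h2 m⟩ ⟨_, h2 (m / 2)⟩ ⟨_, h2 (m / 4)⟩ ⟨_, h2 (m / 16)⟩ ⟨_, h2 (m / 256)⟩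
  simp only [← e] at k
  have c0 : decide (m % 2 = 1) = m.testBit 0 := by simp [Nat.testBit_eq_decide_div_mod_eq]
  have c1 : decide (m / 2 % 2 = 1) = m.testBit 1 := by simp [Nat.testBit_eq_decide_div_mod_eq]
  have c2 : decide (m / 4 % 2 = 1) = m.testBit 2 := by simp [Nat.testBit_eq_decide_div_mod_eq]
  have c4 : decide (m / 16 % 2 = 1) = m.testBit 4 := by simp [Nat.testBit_eq_decide_div_mod_eq]
  have c8 : decide (m / 256 % 2 = 1) = m.testBit 8 := by simp [Nat.testBit_eq_decide_div_mod_eq]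
  rw [c0, c1, c2, c4, c8] at k
  simp only [← Nat.testBit_xor] at k
  generalize m ^^^ nfr m = q at k
  have b0 := bit q 0
  have b1 := bit q 1
  have b2 := bit q 2
  have b4 := bit q 4
  have b8 := bit q 8
  rw [k.1] at b0
  rw [k.2.1] at b1
  rw [k.2.2.1] at b2
  rw [k.2.2.2.1] at b4
  rw [k.2.2.2.2] at b8
  norm_num at b0 b1 b2 b4 b8
  omega

lemma bent_all (m : ℕ) (hm : m < 2 ^ 16) (h0 : m % 2 = 0) (h1 : m / 2 % 2 = 0)
    (h2 : m / 4 % 2 = 0) (h4 : m / 16 % 2 = 0) (h8 : m / 256 % 2 = 0) : bentP m = true := by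
  have l : ∀ k : ℕ, k % 2 < 2 := fun k => Nat.mod_lt _ (by norm_num)
  have h := allB_cons (allB_cons (allB_cons (allB_cons (allB_cons (allB_cons (allB_cons (allB_cons
    (allB_cons (allB_cons (allB_cons bent_check _ (l (m / 8))) _ (l (m / 32))) _ (l (m / 64))) _
    (l (m / 128))) _ (l (m / 512))) _ (l (m / 1024))) _ (l (m / 2048))) _ (l (m / 4096))) _
    (l (m / 8192))) _ (l (m / 16384))) _ (l (m / 32768))
  rw [allB] at h
  convert h using 2
  clear h l
  have f0 : m = 2 * (m / 2) + m % 2 := by omega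
  have f1 : m / 2 = 2 * (m / 4) + m / 2 % 2 := by omega
  have f2 : m / 4 = 2 * (m / 8) + m / 4 % 2 := by omega
  have f3 : m / 8 = 2 * (m / 16) + m / 8 % 2 := by omega
  have f4 : m / 16 = 2 * (m / 32) + m / 16 % 2 := by omega
  have f5 : m / 32 = 2 * (m / 64) + m / 32 % 2 := by omega
  have f6 : m / 64 = 2 * (m / 128) + m / 64 % 2 := by omega
  have f7 : m / 128 = 2 * (m / 256) + m / 128 % 2 := by omega
  have f8 : m / 256 = 2 * (m / 512) + m / 256 % 2 := by omega
  have f9 : m / 512 = 2 * (m / 1024) + m / 512 % 2 := by omega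
  have f10 : m / 1024 = 2 * (m / 2048) + m / 1024 % 2 := by omega
  have f11 : m / 2048 = 2 * (m / 4096) + m / 2048 % 2 := by omega
  have f12 : m / 4096 = 2 * (m / 8192) + m / 4096 % 2 := by omega
  have f13 : m / 8192 = 2 * (m / 16384) + m / 8192 % 2 := by omega
  have f14 : m / 16384 = 2 * (m / 32768) + m / 16384 % 2 := by omega
  have f15 : m / 32768 = 2 * (m / 65536) + m / 32768 % 2 := by omega
  have f16 : m / 65536 = 0 := by omega
  generalize m / 2 % 2 = b1 at *
  generalize m / 2 = q1 at *
  generalize m / 4 % 2 = b2 at *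
  generalize m / 4 = q2 at *
  generalize m / 8 % 2 = b3 at *
  generalize m / 8 = q3 at *
  generalize m / 16 % 2 = b4 at *
  generalize m / 16 = q4 at *
  generalize m / 32 % 2 = b5 at *
  generalize m / 32 = q5 at *
  generalize m / 64 % 2 = b6 at *
  generalize m / 64 = q6 at *
  generalize m / 128 % 2 = b7 at *
  generalize m / 128 = q7 at *
  generalize m / 256 % 2 = b8 at *
  generalize m / 256 = q8 at *
  generalize m / 512 % 2 = b9 at *
  generalize m / 512 = q9 at *
  generalize m / 1024 % 2 = b10 at *
  generalize m / 1024 = q10 at *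
  generalize m / 2048 % 2 = b11 at *
  generalize m / 2048 = q11 at *
  generalize m / 4096 % 2 = b12 at *
  generalize m / 4096 = q12 at *
  generalize m / 8192 % 2 = b13 at *
  generalize m / 8192 = q13 at *
  generalize m / 16384 % 2 = b14 at *
  generalize m / 16384 = q14 at *
  generalize m / 32768 % 2 = b15 at *
  generalize m / 32768 = q15 at *
  generalize m / 65536 = q16 at *
  omega

lemma xor_self_cancel (a b : ℕ) : a ^^^ b ^^^ b = a := by
  rw [Nat.xor_assoc, Nat.xor_self, Nat.xor_zero]

/-- normalized words -/
def nrm (E : Finset ℕ) : Finset ℕ := E.image fun m => m ^^^ nfr m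

lemma nrm_sub {E : Finset ℕ} (h : NGood E) {v : ℕ} (hv : v ∈ nrm E) : v ∈ E := by
  obtain ⟨m, hm, rfl⟩ := Finset.mem_image.1 hv
  exact h.tr _ (nfr_mem m) _ hm

lemma nrm_card {E : Finset ℕ} (h : NGood E) : 8 ≤ (nrm E).card := by
  have h1 : E ⊆ Finset.image₂ (fun v r => v ^^^ r) (nrm E) R32.toFinset := by
    intro m hm
    refine Finset.mem_image₂.2 ⟨m ^^^ nfr m, Finset.mem_image_of_mem _ hm, nfr m, ?_, ?_⟩
    · exact List.mem_toFinset.2 (nfr_mem m)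
    · exact xor_self_cancel _ _
  have h2 := Finset.card_le_card h1
  have h3 := Finset.card_image₂_le (fun v r => v ^^^ r) (nrm E) R32.toFinset
  have h4 : R32.toFinset.card ≤ 32 := List.toFinset_card_le _
  rw [h.card] at h2
  nlinarith

lemma R16_sub : ∀ r ∈ R16, r ∈ R32 := by decide +kernel

lemma xor_mod_two (a b : ℕ) (i : ℕ) (ha : a / 2 ^ i % 2 = 0) (hb : b / 2 ^ i % 2 = 0) :
    (a ^^^ b) / 2 ^ i % 2 = 0 := by
  rw [← Nat.toNat_testBit] at *
  rw [Nat.testBit_xor]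
  cases h1 : a.testBit i <;> cases h2 : b.testBit i <;> simp_all

lemma nrm_xor {E : Finset ℕ} (h : NGood E) {v w : ℕ} (hv : v ∈ nrm E) (hw : w ∈ nrm E) :
    v ^^^ w = 0 ∨ v ^^^ w ∈ L28 := by
  have hv' := nrm_sub h hv
  have hw' := nrm_sub h hw
  have hb : bentP (v ^^^ w) = true := by
    obtain ⟨m, hm, rfl⟩ := Finset.mem_image.1 hv
    obtain ⟨n, hn, rfl⟩ := Finset.mem_image.1 hw
    have b1 := nf_bits m
    have b2 := nf_bits n
    have lt := Nat.xor_lt_two_pow (h.lt _ hv') (h.lt _ hw')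
    generalize m ^^^ nfr m = p at *
    generalize n ^^^ nfr n = q at *
    have x0 := xor_mod_two p q 0 (by simpa using b1.1) (by simpa using b2.1)
    have x1 := xor_mod_two p q 1 (by simpa using b1.2.1) (by simpa using b2.2.1)
    have x2 := xor_mod_two p q 2 (by simpa using b1.2.2.1) (by simpa using b2.2.2.1)
    have x4 := xor_mod_two p q 4 (by simpa using b1.2.2.2.1) (by simpa using b2.2.2.2.1)
    have x8 := xor_mod_two p q 8 (by simpa using b1.2.2.2.2) (by simpa using b2.2.2.2.2)
    simp only [pow_zero, pow_one, Nat.div_one, Nat.reducePow] at x0 x1 x2 x4 x8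
    exact bent_all _ lt x0 x1 x2 x4 x8
  simp only [bentP, force_eq, Bool.or_eq_true, Bool.not_eq_true', memB_iff, List.mem_cons] at hb
  rcases hb with hb | hb
  · exfalso
    rw [← Bool.not_eq_true, List.all_eq_true] at hb
    apply hb
    intro r hr
    have := h.ok _ (h.tr r (R16_sub r hr) v hv') _ hw'
    rwa [Nat.xor_right_comm] at this
  · exact hb

lemma nrm_star {E : Finset ℕ} (h : NGood E) :
    ∃ s ∈ stars, ∀ v ∈ nrm E, v ∈ 0 :: s.2 := by
  have h0 : 0 ∈ nrm E := Finset.mem_image.2 ⟨0, h.zero, by decide⟩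
  have hc := nrm_card h
  have mem : ∀ {v w}, v ∈ nrm E → w ∈ nrm E → v ≠ w → v ^^^ w ∈ L28 := by
    intro v w hv hw hne
    rcases nrm_xor h hv hw with h1 | h1
    · exact absurd (Nat.xor_eq_zero_iff.1 h1) hne
    · exact h1
  have mem0 : ∀ {v}, v ∈ nrm E → v ≠ 0 → v ∈ L28 := by
    intro v hv hne
    have := mem hv h0 hne
    rwa [Nat.xor_zero] at this
  have pk : ∀ l : Finset ℕ, l.card < (nrm E).card → ∃ r ∈ nrm E, r ∉ l := by
    intro l hl
    by_contra hcon
    push Not at hcon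
    exact absurd (Finset.card_le_card hcon) (by omega)
  obtain ⟨v, hv, nv⟩ := pk {0} (by rw [Finset.card_singleton]; omega)
  obtain ⟨w, hw, nw⟩ := pk {0, v} (lt_of_le_of_lt Finset.card_le_two (by omega))
  simp only [Finset.mem_singleton, Finset.mem_insert, not_or] at nv nw
  have sc := star_check
  simp only [memX, force_eq, List.all_eq_true, List.any_eq_true, Bool.or_eq_true,
    Bool.and_eq_true, Bool.not_eq_true', memB_iff] at sc
  have sc1 := sc v (mem0 hv nv) w (mem0 hw nw.1)
  rcases sc1 with sc1 | ⟨s, hs, ⟨sv, sw⟩, sc1⟩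
  · rw [← Bool.not_eq_true, memB_iff] at sc1
    exact absurd (mem hv hw (Ne.symm nw.2)) sc1
  · refine ⟨s, hs, fun x hx => ?_⟩
    by_cases x0 : x = 0
    · simp [x0]
    refine List.mem_cons_of_mem _ ?_
    by_cases xv : x = v
    · rwa [xv]
    by_cases xw : x = w
    · rwa [xw]
    obtain ⟨y, hy, ny⟩ := pk {0, v, w, x} (lt_of_le_of_lt Finset.card_le_four (by omega))
    simp only [Finset.mem_singleton, Finset.mem_insert, not_or] at ny
    rcases sc1 x (mem0 hx x0) with (h1 | h1) | h1
    · rw [← Bool.not_eq_true, Bool.and_eq_true, memB_iff, memB_iff] at h1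
      exact absurd ⟨mem hx hv xv, mem hx hw xw⟩ h1
    · rw [← Bool.not_eq_true, List.any_eq_true] at h1
      refine absurd ⟨y, mem0 hy ny.1, ?_⟩ h1
      simp only [Bool.and_eq_true, memB_iff]
      exact ⟨⟨mem hy hv ny.2.1, mem hy hw ny.2.2.1⟩, mem hy hx ny.2.2.2⟩
    · exact h1

lemma star_words {E : Finset ℕ} (h : NGood E) :
    ∃ k < 8, ∀ m ∈ E, inW (permN (sgl k) m) = true := by
  obtain ⟨s, hs, hv⟩ := nrm_star h
  have k8 : ∀ s ∈ stars, s.1 < 8 := by decide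
  refine ⟨s.1, k8 s hs, fun m hm => ?_⟩
  have pc := perm_check
  simp only [List.all_eq_true] at pc
  have := pc s hs _ (hv _ (Finset.mem_image_of_mem _ hm)) _ (nfr_mem m)
  rwa [xor_self_cancel] at this

lemma T_comp (z : V) (σ : Equiv.Perm (Fin 16)) : T (z ∘ σ) = T z := by
  simp only [T, Function.comp_apply]
  exact Equiv.sum_comp σ fun i => chi (z i)

lemma Good.comp {C : Finset V} (h : Good C) (σ : Equiv.Perm (Fin 16)) :
    Good (C.image fun c => c ∘ σ) := by
  have inj : Function.Injective fun c : V => c ∘ σ := σ.surjective.injective_comp_right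
  refine ⟨by rw [Finset.card_image_of_injective _ inj, h.card], ?_, ?_⟩
  · intro x hx y hy hne
    obtain ⟨a, ha, rfl⟩ := Finset.mem_image.1 hx
    obtain ⟨b, hb, rfl⟩ := Finset.mem_image.1 hy
    have := h.dist a ha b hb (fun e => hne (by rw [e]))
    rw [← T_comp _ σ] at this
    exact this
  · intro x hx y hy
    obtain ⟨a, ha, rfl⟩ := Finset.mem_image.1 hx
    obtain ⟨b, hb, rfl⟩ := Finset.mem_image.1 hy
    have := h.even a ha b hb
    rw [← T_comp _ σ] at this
    exact this

lemma span_mem {P : ℕ → Prop} (h0 : P 0) (hx : ∀ a b, P a → P b → P (a ^^^ b)) (l : List ℕ)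
    (hl : ∀ a ∈ l, P a) : ∀ m ∈ span l, P m := by
  induction l with
  | nil => simpa [span] using h0
  | cons a l ih =>
    have ih' := ih fun b hb => hl b (by simp [hb])
    intro m hm
    simp only [span, List.mem_append, List.mem_map] at hm
    rcases hm with hm | ⟨n, hn, rfl⟩
    · exact ih' m hm
    · exact hx _ _ (ih' n hn) (hl a (by simp))

lemma T_std : ∀ k < 4, T (std k) = 0 := by decide +kernel

lemma enc_std : enc 0 = 0 ∧ enc 1 = 65535 ∧ enc (std 0) = 43690 ∧ enc (std 1) = 52428 ∧
    enc (std 2) = 61680 ∧ enc (std 3) = 65280 := by decide +kernel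

lemma ngood {D : Finset V} (h : Good D) (h0 : (0 : V) ∈ D) (hs : ∀ k < 4, std k ∈ D) :
    NGood (D.image enc) := by
  obtain ⟨e0, e1, s0, s1, s2, s3⟩ := enc_std
  refine ⟨by rw [Finset.card_image_of_injective _ enc_inj, h.card], ?_, ?_, ?_, ?_⟩
  · intro m hm
    obtain ⟨a, ha, rfl⟩ := Finset.mem_image.1 hm
    exact enc_lt a
  · exact Finset.mem_image.2 ⟨0, h0, e0⟩
  · intro x hx y hy
    obtain ⟨a, ha, rfl⟩ := Finset.mem_image.1 hx
    obtain ⟨b, hb, rfl⟩ := Finset.mem_image.1 hy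
    rw [← enc_add]
    have h1 := dist_cases h ha hb
    rw [T_pop] at h1
    have h2 : pop (enc (a + b)) = 0 ∨ pop (enc (a + b)) = 6 ∨ pop (enc (a + b)) = 8 ∨
      pop (enc (a + b)) = 10 ∨ pop (enc (a + b)) = 16 := by omega
    rcases h2 with h2 | h2 | h2 | h2 | h2 <;> rw [h2] <;> decide
  · have key : ∀ r ∈ R32, ∃ z : V, enc z = r ∧ ∀ c ∈ D, c + z ∈ D := by
      have st : ∀ k < 4, ∀ c ∈ D, c + std k ∈ D := by
        intro k hk c hc
        have := translate h (hs k hk) h0 hc (by rw [add_zero]; exact T_std k hk)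
        rwa [add_zero, add_comm] at this
      refine span_mem ⟨0, e0, fun c hc => by rwa [add_zero]⟩ ?_ gens ?_
      · rintro a b ⟨x, rfl, hx⟩ ⟨y, rfl, hy⟩
        refine ⟨x + y, enc_add x y, fun c hc => ?_⟩
        rw [← add_assoc]
        exact hy _ (hx _ hc)
      · intro a ha
        simp only [gens, List.mem_cons, List.not_mem_nil, or_false] at ha
        rcases ha with rfl | rfl | rfl | rfl | rfl
        · exact ⟨1, e1, fun c hc => compl_mem h hc⟩
        · exact ⟨_, s0, st 0 (by norm_num)⟩
        · exact ⟨_, s1, st 1 (by norm_num)⟩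
        · exact ⟨_, s2, st 2 (by norm_num)⟩
        · exact ⟨_, s3, st 3 (by norm_num)⟩
    intro r hr x hx
    obtain ⟨z, rfl, hz⟩ := key r hr
    obtain ⟨a, ha, rfl⟩ := Finset.mem_image.1 hx
    rw [← enc_add]
    exact Finset.mem_image_of_mem _ (hz a ha)

def sg (k : ℕ) : Fin 16 → Fin 16 := fun i => if i.val < 8 then i else Fin.ofNat 16 (i.val ^^^ k)

lemma sg_inv : ∀ k < 8, ∀ i, sg k (sg k i) = i := by decide

lemma sg_list : ∀ k < 8, (List.ofFn fun i => (sg k i : ℕ)) = sgl k := by decide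

lemma inW_card : ((Finset.range (2 ^ 16)).filter fun m => inW m = true).card ≤ 256 := by
  have h1 : ((Finset.range (2 ^ 16)).filter fun m => inW m = true) ⊆
      Finset.image₂ (fun v r => v ^^^ r) star0.toFinset R32.toFinset := by
    intro m hm
    have h2 := (Finset.mem_filter.1 hm).2
    simp only [inW, force_eq, memB_iff] at h2
    refine Finset.mem_image₂.2 ⟨m ^^^ nfr m, List.mem_toFinset.2 h2, nfr m, ?_, ?_⟩
    · exact List.mem_toFinset.2 (nfr_mem m)
    · exact xor_self_cancel _ _
  have h2 := Finset.card_le_card h1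
  have h3 := Finset.card_image₂_le (fun v r => v ^^^ r) star0.toFinset R32.toFinset
  have h4 : R32.toFinset.card ≤ 32 := List.toFinset_card_le _
  have h5 : star0.toFinset.card ≤ 8 := List.toFinset_card_le _
  nlinarith

theorem unique16 {C : Finset V} (h : Good C) (h0 : (0 : V) ∈ C) :
    ∃ σ : Equiv.Perm (Fin 16), σ 0 = 0 ∧ ∀ c : V, c ∈ C ↔ inW (enc (c ∘ σ)) = true := by
  obtain ⟨φ, φ0, hφ⟩ := coords h h0
  have hD := h.comp φ.symm
  obtain ⟨k, hk, hw⟩ := star_words (ngood hD (Finset.mem_image.2 ⟨0, h0, rfl⟩) (by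
    intro k hk
    refine Finset.mem_image.2 ⟨_, hφ k hk, ?_⟩
    funext i
    simp))
  let s : Equiv.Perm (Fin 16) := Function.Involutive.toPerm (sg k) (sg_inv k hk)
  let σ : Equiv.Perm (Fin 16) := s.trans φ.symm
  have fwd : ∀ c ∈ C, inW (enc (c ∘ σ)) = true := by
    intro c hc
    have := hw (enc (c ∘ φ.symm)) (Finset.mem_image_of_mem _ (Finset.mem_image_of_mem _ hc))
    rw [← sg_list k hk, ← enc_perm] at this
    exact this
  refine ⟨σ, ?_, fun c => ⟨fwd c, fun hc => ?_⟩⟩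
  · have : sg k 0 = 0 := by simp [sg]
    change φ.symm (sg k 0) = 0
    rw [this, Equiv.symm_apply_eq, φ0]
  · have inj : Function.Injective fun c : V => enc (c ∘ σ) := by
      intro a b hab
      exact σ.surjective.injective_comp_right (enc_inj hab)
    have sub : (C.image fun c => enc (c ∘ σ)) ⊆
        (Finset.range (2 ^ 16)).filter fun m => inW m = true := by
      intro m hm
      obtain ⟨a, ha, rfl⟩ := Finset.mem_image.1 hm
      exact Finset.mem_filter.2 ⟨Finset.mem_range.2 (enc_lt _), fwd a ha⟩
    have eq := Finset.eq_of_subset_of_card_le sub (by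
      rw [Finset.card_image_of_injective _ inj, h.card]
      exact inW_card)
    have : enc (c ∘ σ) ∈ C.image fun c => enc (c ∘ σ) := by
      rw [eq]
      exact Finset.mem_filter.2 ⟨Finset.mem_range.2 (enc_lt _), hc⟩
    obtain ⟨a, ha, e⟩ := Finset.mem_image.1 this
    rwa [← inj e]


/-! ### Length 15 -/

abbrev U := Fin 15 → ZMod 2

def ext (x : U) : V := Fin.cons (∑ i, x i) x

def N (y : U) : Prop := inW (enc (ext y)) = true

instance (y : U) : Decidable (N y) := inferInstanceAs (Decidable (_ = _))

def encU (y : U) : ℕ := enc (Fin.cons 0 y)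

lemma cons_add (a b : ZMod 2) (x y : U) :
    (Fin.cons a x : V) + (Fin.cons b y : V) = (Fin.cons (a + b) (x + y) : V) := by
  funext i
  refine Fin.cases ?_ (fun j => ?_) i <;> simp

lemma ext_add (x y : U) : ext (x + y) = ext x + ext y := by
  simp only [ext, cons_add, Pi.add_apply, Finset.sum_add_distrib]

lemma ext_inj : Function.Injective ext := by
  intro x y h
  funext i
  have := congrFun h i.succ
  simpa [ext] using this

lemma encU_add (x y : U) : encU (x + y) = encU x ^^^ encU y := by
  rw [encU, encU, encU, ← enc_add, cons_add, add_zero]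

lemma encU_inj : Function.Injective encU := by
  intro x y h
  have h1 := enc_inj h
  funext i
  have := congrFun h1 i.succ
  simpa using this

lemma two_addU (x : U) : x + x = 0 := by
  funext i
  exact CharTwo.add_self_eq_zero (x i)

lemma add_addU (x y : U) : x + y + y = x := by
  rw [add_assoc, two_addU, add_zero]

lemma norm_val (x : U) : hammingNorm x = ∑ i, (x i).val := by
  rw [hammingNorm, Finset.card_filter]
  refine Finset.sum_congr rfl fun i _ => ?_
  generalize x i = a
  revert a
  decide

lemma sum_eq_norm (x : U) : ∑ i, x i = (hammingNorm x : ZMod 2) := by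
  rw [norm_val]
  push_cast
  simp

lemma hd_norm (x y : U) : hammingDist x y = hammingNorm (x + y) := by
  rw [hammingDist_eq_hammingNorm, ZModModule.neg_eq_self]

lemma T_cons (a : ZMod 2) (x : U) : T (Fin.cons a x) = chi a + 15 - 2 * (hammingNorm x : ℤ) := by
  have : ∀ a : ZMod 2, chi a = 1 - 2 * (a.val : ℤ) := by decide
  rw [T, Fin.sum_univ_succ, norm_val]
  simp only [Fin.cons_zero, Fin.cons_succ]
  have h2 : ∑ i, chi (x i) = 15 - 2 * ∑ i, ((x i).val : ℤ) := by
    simp [this, Finset.sum_sub_distrib, Finset.mul_sum]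
  rw [h2]
  push_cast
  ring

lemma chi_cast (n : ℕ) : chi (n : ZMod 2) = 1 - 2 * ((n % 2 : ℕ) : ℤ) := by
  have h : ∀ a : ZMod 2, chi a = 1 - 2 * (a.val : ℤ) := by decide
  rw [h, ZMod.val_natCast]

lemma T_ext (x : U) : T (ext x) = 16 - 2 * ((hammingNorm x + hammingNorm x % 2 : ℕ) : ℤ) := by
  rw [ext, T_cons, sum_eq_norm, chi_cast]
  push_cast
  ring

lemma T_odd (x : U) : T (Fin.cons (1 + ∑ i, x i) x) =
    16 - 2 * ((hammingNorm x + (hammingNorm x + 1) % 2 : ℕ) : ℤ) := by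
  rw [T_cons, sum_eq_norm, show (1 : ZMod 2) + (hammingNorm x : ZMod 2) =
    ((hammingNorm x + 1 : ℕ) : ZMod 2) by push_cast; ring, chi_cast]
  push_cast
  ring

lemma norm_pop (x : U) : hammingNorm x = pop (encU x) := by
  have h1 := T_pop (Fin.cons 0 x)
  rw [T_cons, chi_zero] at h1
  rw [encU]
  omega

lemma norm_comp (x : U) (τ : Equiv.Perm (Fin 15)) : hammingNorm (x ∘ τ) = hammingNorm x := by
  rw [norm_val, norm_val]
  exact Equiv.sum_comp τ fun i => (x i).val

/-- The extension of a translate of the code. -/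
def extC (C : Finset U) (c : U) : Finset V := C.image fun x => ext (x + c)

lemma extC_good {C : Finset U} (hc : C.card = 256)
    (hd : ∀ x ∈ C, ∀ y ∈ C, x ≠ y → 5 ≤ hammingDist x y) (c : U) : Good (extC C c) := by
  have inj : Function.Injective fun x : U => ext (x + c) := fun x y h =>
    add_right_cancel (ext_inj h)
  have tt : ∀ a b : U, T (ext (a + c) + ext (b + c)) =
      16 - 2 * ((hammingDist a b + hammingDist a b % 2 : ℕ) : ℤ) := by
    intro a b
    rw [← ext_add, show a + c + (b + c) = a + b by
      rw [add_add_add_comm, two_addU, add_zero], T_ext, hd_norm]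
  refine ⟨by rw [extC, Finset.card_image_of_injective _ inj, hc], ?_, ?_⟩
  · intro x hx y hy hne
    obtain ⟨a, ha, rfl⟩ := Finset.mem_image.1 hx
    obtain ⟨b, hb, rfl⟩ := Finset.mem_image.1 hy
    have := hd a ha b hb (fun e => hne (by rw [e]))
    simp only [tt]
    omega
  · intro x hx y hy
    obtain ⟨a, ha, rfl⟩ := Finset.mem_image.1 hx
    obtain ⟨b, hb, rfl⟩ := Finset.mem_image.1 hy
    simp only [tt]
    omega

lemma ext_comp (y : U) (e : Equiv.Perm (Fin 15)) :
    ext y ∘ (Fin.cons 0 (Fin.succ ∘ e) : Fin 16 → Fin 16) = ext (y ∘ e) := by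
  funext i
  refine Fin.cases ?_ (fun j => ?_) i
  · simp only [Function.comp_apply, Fin.cons_zero, ext]
    exact (Equiv.sum_comp e y).symm
  · simp [ext]

lemma cons_comp (y : U) (e : Equiv.Perm (Fin 15)) :
    (Fin.cons 0 y : V) ∘ (Fin.cons 0 (Fin.succ ∘ e) : Fin 16 → Fin 16) = Fin.cons 0 (y ∘ e) := by
  funext i
  refine Fin.cases ?_ (fun j => ?_) i
  · simp
  · simp

lemma unique15 {C : Finset U} (hc : C.card = 256)
    (hd : ∀ x ∈ C, ∀ y ∈ C, x ≠ y → 5 ≤ hammingDist x y) {c : U} (hcC : c ∈ C) :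
    ∃ τ : Equiv.Perm (Fin 15), ∀ x, x ∈ C ↔ N ((x + c) ∘ τ) := by
  obtain ⟨σ, σ0, hσ⟩ := unique16 (extC_good hc hd c) (Finset.mem_image.2 ⟨c, hcC, by
    rw [two_addU]
    funext i
    refine Fin.cases ?_ (fun j => ?_) i <;> simp [ext]⟩)
  obtain ⟨⟨p, e⟩, rfl⟩ := Equiv.Perm.decomposeFin.symm.surjective σ
  rw [Equiv.Perm.decomposeFin_symm_apply_zero] at σ0
  subst σ0
  have hs : ⇑(Equiv.Perm.decomposeFin.symm ((0 : Fin 16), e)) =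
      (Fin.cons 0 (Fin.succ ∘ e) : Fin 16 → Fin 16) := by
    funext i
    refine Fin.cases ?_ (fun j => ?_) i
    · rw [Equiv.Perm.decomposeFin_symm_apply_zero]; rfl
    · rw [Equiv.Perm.decomposeFin_symm_apply_succ]
      simp
  refine ⟨e, fun x => ?_⟩
  have h1 : x ∈ C ↔ ext (x + c) ∈ extC C c := by
    constructor
    · intro hx
      exact Finset.mem_image_of_mem (fun x => ext (x + c)) hx
    · intro hx
      obtain ⟨a, ha, e⟩ := Finset.mem_image.1 hx
      rwa [← add_right_cancel (ext_inj e)]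
  rw [h1, hσ, hs, ext_comp]
  rfl

lemma cover15 {C : Finset U} (hc : C.card = 256)
    (hd : ∀ x ∈ C, ∀ y ∈ C, x ≠ y → 5 ≤ hammingDist x y) (x : U) :
    ∃ c ∈ C, hammingDist x c ≤ 3 := by
  have h := extC_good hc hd 0
  obtain ⟨o, ho⟩ : ∃ o : V, ∀ c : U, T (o + ext (c + 0)) =
      16 - 2 * ((hammingDist x c + (hammingDist x c + 1) % 2 : ℕ) : ℤ) := by
    refine ⟨Fin.cons (1 + ∑ i, x i) x, fun c => ?_⟩
    have e : 1 + ∑ i, x i + ∑ i, c i = 1 + ∑ i, (x + c) i := by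
      simp only [Pi.add_apply, Finset.sum_add_distrib, add_assoc]
    rw [add_zero, ext, cons_add, hd_norm, ← T_odd, e]
  obtain ⟨c', hc', h10⟩ := cover h o (by
    intro c' hc'
    obtain ⟨a, ha, e⟩ := Finset.mem_image.1 hc'
    rw [← e, ho]
    omega)
  obtain ⟨a, ha, e⟩ := Finset.mem_image.1 hc'
  refine ⟨a, ha, ?_⟩
  rw [← e, ho] at h10
  omega

/-! ### Automorphisms of the model -/

def Aut (α : Equiv.Perm (Fin 15)) : Prop := ∀ y, N y → N (y ∘ α)

lemma comp_mul (y : U) (α β : Equiv.Perm (Fin 15)) : y ∘ ⇑(α * β) = (y ∘ α) ∘ β := rfl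

lemma comp_one (y : U) : y ∘ ⇑(1 : Equiv.Perm (Fin 15)) = y := rfl

lemma Aut.mul {α β : Equiv.Perm (Fin 15)} (hα : Aut α) (hβ : Aut β) : Aut (α * β) := by
  intro y hy
  rw [comp_mul]
  exact hβ _ (hα _ hy)

lemma Aut.one : Aut 1 := by
  intro y hy
  rwa [comp_one]

lemma Aut.pow {α : Equiv.Perm (Fin 15)} (hα : Aut α) (n : ℕ) : Aut (α ^ n) := by
  induction n with
  | zero => exact Aut.one
  | succ n ih => rw [pow_succ]; exact ih.mul hα

lemma Aut.inv {α : Equiv.Perm (Fin 15)} (hα : Aut α) : Aut α⁻¹ := by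
  have h1 : α⁻¹ = α ^ (orderOf α - 1) := by
    rw [inv_eq_iff_mul_eq_one, ← pow_succ', Nat.sub_add_cancel (orderOf_pos α), pow_orderOf_eq_one]
  rw [h1]
  exact hα.pow _

def f1 : Fin 15 → Fin 15 := ![3, 4, 0, 13, 9, 10, 14, 2, 6, 5, 1, 12, 8, 7, 11]
def f2 : Fin 15 → Fin 15 := ![13, 12, 2, 4, 10, 7, 5, 6, 8, 9, 3, 1, 11, 14, 0]

def l1 : List ℕ := [0, 4, 5, 1, 14, 10, 11, 15, 3, 7, 6, 2, 13, 9, 8, 12]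
def l2 : List ℕ := [0, 14, 13, 3, 5, 11, 8, 6, 7, 9, 10, 4, 2, 12, 15, 1]

noncomputable def a1 : Equiv.Perm (Fin 15) :=
  Equiv.ofBijective f1 (Finite.injective_iff_bijective.1 (by decide))
noncomputable def a2 : Equiv.Perm (Fin 15) :=
  Equiv.ofBijective f2 (Finite.injective_iff_bijective.1 (by decide))

lemma l1_eq : (List.ofFn fun i => ((Fin.cons 0 (Fin.succ ∘ a1) : Fin 16 → Fin 16) i : ℕ)) = l1 := by
  change (List.ofFn fun i => ((Fin.cons 0 (Fin.succ ∘ f1) : Fin 16 → Fin 16) i : ℕ)) = l1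
  decide

lemma l2_eq : (List.ofFn fun i => ((Fin.cons 0 (Fin.succ ∘ a2) : Fin 16 → Fin 16) i : ℕ)) = l2 := by
  change (List.ofFn fun i => ((Fin.cons 0 (Fin.succ ∘ f2) : Fin 16 → Fin 16) i : ℕ)) = l2
  decide

lemma aut_check : (star0.all fun v => R32.all fun r =>
    inW (permN l1 (v ^^^ r)) && inW (permN l2 (v ^^^ r))) = true := by
  decide +kernel

lemma inW_perm (m : ℕ) (h : inW m = true) :
    inW (permN l1 m) = true ∧ inW (permN l2 m) = true := by
  have ac := aut_check
  simp only [List.all_eq_true, Bool.and_eq_true] at ac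
  simp only [inW, force_eq, memB_iff] at h
  have := ac _ h _ (nfr_mem m)
  rwa [xor_self_cancel] at this

lemma aut1 : Aut a1 := by
  intro y hy
  have := (inW_perm _ hy).1
  rwa [← l1_eq, ← enc_perm, ext_comp] at this

lemma aut2 : Aut a2 := by
  intro y hy
  have := (inW_perm _ hy).2
  rwa [← l2_eq, ← enc_perm, ext_comp] at this

def bfs : ℕ → List ℕ → List ℕ → List ℕ
  | 0, _, seen => seen
  | _ + 1, [], seen => seen
  | n + 1, m :: q, seen =>
    bif memB m seen then bfs n q seen else bfs n (q ++ [permN l1 m, permN l2 m]) (m :: seen)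

lemma bfs_sound {P : ℕ → Prop} (h1 : ∀ m, P m → P (permN l1 m)) (h2 : ∀ m, P m → P (permN l2 m))
    (n : ℕ) (q seen : List ℕ) (hq : ∀ m ∈ q, P m) (hs : ∀ m ∈ seen, P m) :
    ∀ m ∈ bfs n q seen, P m := by
  induction n generalizing q seen with
  | zero => simpa [bfs] using hs
  | succ n ih =>
    cases q with
    | nil => simpa [bfs] using hs
    | cons m q =>
      have hm := hq m (by simp)
      have hq' : ∀ k ∈ q, P k := fun k hk => hq k (by simp [hk])
      rw [bfs]
      cases memB m seen
      · refine ih _ _ ?_ ?_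
        · intro k hk
          simp only [List.mem_append, List.mem_cons, List.not_mem_nil, or_false] at hk
          rcases hk with hk | hk | hk
          · exact hq' k hk
          · rw [hk]; exact h1 m hm
          · rw [hk]; exact h2 m hm
        · intro k hk
          rcases List.mem_cons.1 hk with rfl | hk
          · exact hm
          · exact hs k hk
      · exact ih _ _ hq' hs

def rep (j : ℕ) : U := fun i => if i.val < j then 1 else 0

def orb (j : ℕ) : List ℕ := bfs 400 [2 ^ (j + 1) - 2] []

lemma encU_rep : ∀ j < 4, encU (rep j) = 2 ^ (j + 1) - 2 := by decide +kernel

lemma encU_perm1 (y : U) : encU (y ∘ a1) = permN l1 (encU y) := by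
  rw [encU, ← cons_comp, enc_perm, l1_eq, encU]

lemma encU_perm2 (y : U) : encU (y ∘ a2) = permN l2 (encU y) := by
  rw [encU, ← cons_comp, enc_perm, l2_eq, encU]

lemma orb_sound (j : ℕ) (hj : j < 4) : ∀ m ∈ orb j, ∃ α, Aut α ∧ m = encU (rep j ∘ α) := by
  refine bfs_sound ?_ ?_ _ _ _ ?_ ?_
  · rintro m ⟨α, hα, e⟩
    refine ⟨α * a1, hα.mul aut1, ?_⟩
    rw [e, ← encU_perm1, comp_mul]
  · rintro m ⟨α, hα, e⟩
    refine ⟨α * a2, hα.mul aut2, ?_⟩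
    rw [e, ← encU_perm2, comp_mul]
  · intro m hm
    rw [List.mem_singleton.1 hm]
    refine ⟨1, Aut.one, ?_⟩
    rw [comp_one, encU_rep j hj]
  · intro m hm
    simp at hm

def W5 : List ℕ := [
  916, 1480, 1618, 2466, 2616, 3172, 4396, 4746, 5296, 6166, 6976, 8518, 8928, 9258,
  10380, 11536, 12376, 13828, 16666, 16972, 17542, 18208, 18640, 20578, 23560, 24628,
  27138, 29056, 33136, 33318, 33820, 34890, 36480, 37060, 38146, 41106, 41736, 47136,
  49320, 51460, 53776, 58432]

def decU (m : ℕ) : U := fun i => ((m / 2 ^ (i.val + 1) : ℕ) : ZMod 2)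

lemma W5_check : ∀ w ∈ W5, N (decU w) ∧ encU (decU w) = w := by
  decide +kernel

def allW (P : ℕ → Bool) : ℕ → ℕ → ℕ → ℕ → Bool
  | 0, _, _, m => P m
  | n + 1, 0, a, m => allW P n 0 (2 * a) m
  | n + 1, k + 1, a, m => allW P n (k + 1) (2 * a) m && allW P n k (2 * a) (m + a)

lemma allW_sound {P : ℕ → Bool} (n k a m : ℕ) (h : allW P n k a m = true) (l : List ℕ)
    (hl : l.length = n) (h2 : ∀ b ∈ l, b < 2) (hk : l.sum ≤ k) : P (m + a * encL l) = true := by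
  induction n generalizing k a m l with
  | zero =>
    rw [List.length_eq_zero_iff] at hl
    subst hl
    simpa [encL, allW] using h
  | succ n ih =>
    cases l with
    | nil => simp at hl
    | cons b l =>
      have hl' : l.length = n := by simpa using hl
      have hb := h2 b (by simp)
      have h2' : ∀ c ∈ l, c < 2 := fun c hc => h2 c (by simp [hc])
      rw [List.sum_cons] at hk
      have e : m + a * encL (b :: l) = (m + a * b) + 2 * a * encL l := by
        rw [encL_cons]; ring
      rw [e]
      have hb2 : b = 0 ∨ b = 1 := by omega
      cases k with
      | zero =>
        rw [allW] at h
        rcases hb2 with rfl | rfl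
        · exact ih _ _ _ (by simpa using h) l hl' h2' (by omega)
        · omega
      | succ k =>
        rw [allW, Bool.and_eq_true] at h
        rcases hb2 with rfl | rfl
        · exact ih _ _ _ (by simpa using h.1) l hl' h2' (by omega)
        · exact ih k _ _ (by simpa using h.2) l hl' h2' (by omega)

def orbAll : List ℕ := orb 0 ++ orb 1 ++ orb 2 ++ orb 3

def tripP (o : List ℕ) (m : ℕ) : Bool := force m fun m => memB m o ||
  (Nat.beq (pop m) 3 && W5.any fun w => Nat.beq (Nat.land m w) m && Nat.ble (pop (m ^^^ w)) 2)

lemma trip_check : allW (tripP orbAll) 15 3 2 0 = true := by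
  decide +kernel

lemma canon (y : U) (hy : hammingNorm y ≤ 3) :
    (∃ j < 4, ∃ α, Aut α ∧ y = rep j ∘ α) ∨
    (hammingNorm y = 3 ∧ ∃ z, N z ∧ hammingDist y z ≤ 2) := by
  have h := allW_sound 15 3 2 0 trip_check (List.ofFn fun i => (y i).val) (by simp) (by
      intro b hb
      obtain ⟨i, rfl⟩ := (List.mem_ofFn' _ _).1 hb
      exact (y i).val_lt) (by
      rw [List.sum_ofFn, ← norm_val]; exact hy)
  have e : 0 + 2 * encL (List.ofFn fun i => (y i).val) = encU y := by
    rw [encU, enc, List.ofFn_succ, encL_cons]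
    rfl
  rw [e] at h
  simp only [tripP, force_eq, Bool.or_eq_true, Bool.and_eq_true, memB_iff, orbAll, List.mem_append,
    List.any_eq_true, Nat.beq_eq, Nat.ble_eq, ← norm_pop] at h
  have fin : ∀ j < 4, encU y ∈ orb j → (∃ j < 4, ∃ α, Aut α ∧ y = rep j ∘ α) := by
    intro j hj hm
    obtain ⟨α, hα, e⟩ := orb_sound j hj _ hm
    exact ⟨j, hj, α, hα, encU_inj e⟩
  rcases h with (((h | h) | h) | h) | ⟨h3, w, hw, -, hp⟩
  · exact Or.inl (fin 0 (by norm_num) h)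
  · exact Or.inl (fin 1 (by norm_num) h)
  · exact Or.inl (fin 2 (by norm_num) h)
  · exact Or.inl (fin 3 (by norm_num) h)
  · obtain ⟨hN, hE⟩ := W5_check w hw
    refine Or.inr ⟨h3, decU w, hN, ?_⟩
    rw [hd_norm, norm_pop, encU_add, hE]
    exact hp

lemma norm_rep : ∀ j < 4, hammingNorm (rep j) = j := by decide +kernel


/-! ### The main argument -/

lemma aut_hd {f : Equiv.Perm U} (h : IsHammingAut f) (x y : U) :
    hammingDist (f x) (f y) = hammingDist x y := by
  obtain ⟨σ, v, hf⟩ := h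
  rw [hf, hf, hd_norm, hd_norm, show ((fun i => x (σ.symm i)) + v + ((fun i => y (σ.symm i)) + v) : U)
    = (x + y) ∘ σ.symm by
      rw [add_add_add_comm, two_addU, add_zero]; rfl, norm_comp]

lemma aut_dist {C : Set U} {f : Equiv.Perm U} (h : IsHammingAut f) (hC : ⇑f '' C = C) (x : U) :
    distToCode C (f x) = distToCode C x := by
  unfold distToCode
  congr 1
  ext d
  constructor
  · rintro ⟨c, hc, e⟩
    rw [← hC] at hc
    obtain ⟨a, ha, e'⟩ := hc
    refine ⟨a, ha, ?_⟩
    rw [← e, ← e', aut_hd h]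
  · rintro ⟨c, hc, e⟩
    refine ⟨f c, ?_, ?_⟩
    · rw [← hC]
      exact ⟨c, hc, rfl⟩
    · rw [aut_hd h, e]

/-- The full automorphism group of the code. -/
def fullAut (C : Set U) : Subgroup (Equiv.Perm U) where
  carrier := {g | IsHammingAut g ∧ ⇑g '' C = C}
  one_mem' := by
    refine ⟨⟨1, 0, fun x => ?_⟩, ?_⟩
    · rw [add_zero]; rfl
    · simp
  mul_mem' := by
    rintro f g ⟨⟨σ, v, hf⟩, hfC⟩ ⟨⟨τ, w, hg⟩, hgC⟩
    refine ⟨⟨σ * τ, (fun i => w (σ.symm i)) + v, fun x => ?_⟩, ?_⟩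
    · rw [Equiv.Perm.mul_apply, hf, hg, ← add_assoc]
      rfl
    · rw [Equiv.Perm.coe_mul, Set.image_comp, hgC, hfC]
  inv_mem' := by
    rintro f ⟨⟨σ, v, hf⟩, hfC⟩
    refine ⟨⟨σ⁻¹, fun i => v (σ i), fun x => ?_⟩, ?_⟩
    · rw [Equiv.Perm.inv_eq_iff_eq, hf]
      funext i
      have e : σ⁻¹.symm = σ := rfl
      simp only [Pi.add_apply, e, Equiv.apply_symm_apply]
      rw [add_assoc, CharTwo.add_self_eq_zero, add_zero]
    · nth_rewrite 1 [← hfC]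
      rw [← Set.image_comp]
      simp

lemma dist_spec {C : Set U} (hne : C.Nonempty) (x : U) :
    (∃ c ∈ C, hammingDist x c = distToCode C x) ∧ ∀ c ∈ C, distToCode C x ≤ hammingDist x c := by
  constructor
  · obtain ⟨c, hc⟩ := hne
    exact Nat.sInf_mem (s := {d | ∃ c ∈ C, hammingDist x c = d}) ⟨_, c, hc, rfl⟩
  · intro c hc
    exact Nat.sInf_le ⟨c, hc, rfl⟩

/-- Every vector can be brought to canonical position. -/
lemma normal_form {C : Finset U} (hc : C.card = 256)
    (hd : ∀ x ∈ C, ∀ y ∈ C, x ≠ y → 5 ≤ hammingDist x y) (x : U) :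
    ∃ (c : U) (τ α : Equiv.Perm (Fin 15)), (∀ z, z ∈ C ↔ N ((z + c) ∘ τ)) ∧ Aut α ∧
      (x + c) ∘ τ = rep (distToCode (C : Set U) x) ∘ α := by
  have hne : (C : Set U).Nonempty := by
    rw [Finset.coe_nonempty, ← Finset.card_pos, hc]; norm_num
  obtain ⟨⟨c, hcC, hxc⟩, hmin⟩ := dist_spec hne x
  obtain ⟨c3, hc3, h3⟩ := cover15 hc hd x
  have hle := (hmin c3 hc3).trans h3
  obtain ⟨τ, hτ⟩ := unique15 hc hd (Finset.mem_coe.1 hcC)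
  have hn : hammingNorm ((x + c) ∘ τ) = distToCode (C : Set U) x := by
    rw [norm_comp, ← hd_norm, hxc]
  rcases canon ((x + c) ∘ τ) (by omega) with ⟨j, hj, α, hα, e⟩ | ⟨h3', z, hz, hzd⟩
  · have hj' : distToCode (C : Set U) x = j := by
      rw [← hn, e, norm_comp, norm_rep j hj]
    refine ⟨c, τ, α, hτ, hα, ?_⟩
    rw [hj', e]
  · exfalso
    have e1 : (z ∘ τ.symm + c + c) ∘ τ = z := by
      rw [add_addU]
      funext i
      simp
    have hm : z ∘ τ.symm + c ∈ C := by
      rw [hτ, e1]; exact hz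
    have h5 := hmin _ (Finset.mem_coe.2 hm)
    have e2 : (x + (z ∘ τ.symm + c)) ∘ τ = (x + c) ∘ τ + z := by
      funext i
      simp only [Function.comp_apply, Pi.add_apply, Equiv.symm_apply_apply]
      ring
    rw [hd_norm, ← norm_comp _ τ, e2, ← hd_norm] at h5
    omega

lemma transitive {C : Finset U} (hc : C.card = 256)
    (hd : ∀ x ∈ C, ∀ y ∈ C, x ≠ y → 5 ≤ hammingDist x y) (x y : U)
    (hxy : distToCode (C : Set U) x = distToCode (C : Set U) y) :
    ∃ g ∈ fullAut (C : Set U), g x = y := by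
  obtain ⟨c, τ, α, hτ, hα, ex⟩ := normal_form hc hd x
  obtain ⟨c', τ', β, hτ', hβ, ey⟩ := normal_form hc hd y
  rw [hxy] at ex
  have hγ : Aut (α⁻¹ * β) := hα.inv.mul hβ
  obtain ⟨γ, hγe⟩ : ∃ γ, γ = α⁻¹ * β := ⟨_, rfl⟩
  rw [← hγe] at hγ
  have exy : ((x + c) ∘ τ) ∘ γ = (y + c') ∘ τ' := by
    rw [ex, ey, hγe]
    funext i
    simp
  let π : Equiv.Perm (Fin 15) := τ * γ * τ'⁻¹
  let g : Equiv.Perm U := (Equiv.arrowCongr π.symm (Equiv.refl (ZMod 2))).trans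
    (Equiv.addRight (c ∘ π + c'))
  have gz : ∀ z : U, g z = z ∘ π + (c ∘ π + c') := fun z => rfl
  have key : ∀ z : U, (g z + c') ∘ τ' = ((z + c) ∘ τ) ∘ γ := by
    intro z
    rw [gz, ← add_assoc, add_addU]
    funext i
    simp [π]
  have sub : ⇑g '' (C : Set U) ⊆ C := by
    rintro _ ⟨z, hz, rfl⟩
    rw [Finset.mem_coe, hτ', key]
    exact hγ _ ((hτ z).1 hz)
  refine ⟨g, ⟨⟨π.symm, c ∘ π + c', fun z => rfl⟩, ?_⟩, ?_⟩
  · refine Set.eq_of_subset_of_ncard_le sub ?_ C.finite_toSet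
    rw [Set.ncard_image_of_injective _ g.injective]
  · have h1 := (key x).trans exy
    have h2 : g x + c' = y + c' := by
      funext i
      have := congrFun h1 (τ'.symm i)
      simpa using this
    exact add_right_cancel h2

end NR

/-- Every binary `(15, 256, 5)` code is completely transitive; in particular the
punctured Nordstrom-Robinson code is completely transitive. -/
theorem stmt_10 (C : Set (Fin 15 → ZMod 2)) (hcard : C.ncard = 256)
    (hd : IsMinDist C 5) :
    IsCompletelyTransitive C := by
  obtain ⟨D, rfl⟩ : ∃ D : Finset (Fin 15 → ZMod 2), (D : Set (Fin 15 → ZMod 2)) = C :=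
    ⟨C.toFinite.toFinset, by simp⟩
  rw [Set.ncard_coe_finset] at hcard
  refine ⟨NR.fullAut (D : Set (Fin 15 → ZMod 2)), fun g hg => hg, ?_⟩
  intro i x hx
  ext y
  constructor
  · intro hy
    exact NR.transitive hcard (fun a ha b hb => hd.1 a ha b hb) x y (hx.trans hy.symm)
  · rintro ⟨g, hg, rfl⟩
    exact (NR.aut_dist hg.1 hg.2 x).trans hx
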